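/- arXiv:2501.13980 — 4 statements merged into one kernel-verified Lean document; each statement's English description precedes it below -/
import Mathlib

section
/- For every integer n ≥ 8 there exists a 4-connected locally nonforesty graph of order n whose size equals h(n), where h(n) = 2n if n ≡ 0 (mod 4) and h(n) = 2n + 1 otherwise. Consequently, the minimum size of a 4-connected locally nonforesty graph of order n is exactly h(n). -/
/-- A graph `G` is locally nonforesty if for every vertex `v`, the subgraph induced by
the neighborhood of `v` contains a cycle (i.e., is not acyclic). -/
def LocallyNonforesty {V : Type*} (G : SimpleGraph V) : Prop :=
  ∀ v : V, ¬ (G.induce (G.neighborSet v)).IsAcyclic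

/-- A graph is `k`-connected if it has more than `k` vertices and deleting any set of
fewer than `k` vertices leaves a connected graph. -/
def KConnected {V : Type*} [Fintype V] (G : SimpleGraph V) (k : ℕ) : Prop :=
  k < Fintype.card V ∧
    ∀ S : Finset V, S.card < k → (G.induce ((↑S : Set V)ᶜ)).Connected

/-!
Lower bound: minimum degree at least four gives size at least `2 * n`, with equality only for
4-regular graphs. In such a graph every vertex `v` lies in a 4-clique, for otherwise a path in the
neighbourhood of `v` produces a separator with three vertices, and two different 4-cliques are
disjoint, for otherwise they share three vertices and the other two form a separator. So `4 ∣ n`.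

Upper bound: arrange `⌈n / 4⌉` 4-cliques in a ring, consecutive ones joined by two disjoint edges,
except that the last and the first overlap in `4 * ⌈n / 4⌉ - n` vertices. Three deleted vertices
interrupt the ring in at most one place, so the rest stays connected.
-/

section Separation

variable {V : Type*} [Fintype V] {G : SimpleGraph V} {k : ℕ}

theorem KConnected.union_eq_univ [DecidableEq V] (h : KConnected G k) {A S : Finset V} {a : V}
    (haA : a ∈ A) (haS : a ∉ S) (hS : S.card < k)
    (hclosed : ∀ u ∈ A, ∀ w, G.Adj u w → w ∈ A ∪ S) : A ∪ S = Finset.univ := by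
  by_contra hne
  obtain ⟨b, hb⟩ : ∃ b, b ∉ A ∪ S := by simpa [Finset.eq_univ_iff_forall] using hne
  rw [Finset.mem_union, not_or] at hb
  obtain ⟨p⟩ := (h.2 S hS).preconnected ⟨a, by simpa using haS⟩ ⟨b, by simpa using hb.2⟩
  obtain ⟨⟨⟨u, w⟩, huw⟩, -, hu, hw⟩ := p.exists_boundary_dart {x | x.1 ∈ A} haA hb.1
  exact (Finset.mem_union.mp (hclosed u hu w huw)).elim hw w.2

theorem KConnected.le_degree [DecidableRel G.Adj] (h : KConnected G k) (v : V) :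
    k ≤ G.degree v := by
  classical
  by_contra! hlt
  have huniv : {v} ∪ G.neighborFinset v = Finset.univ :=
    h.union_eq_univ (Finset.mem_singleton_self v) (by simp) hlt fun u hu w huw => by
      rw [Finset.mem_singleton.mp hu] at huw
      simp [huw]
  have hcard := Finset.card_union_le {v} (G.neighborFinset v)
  rw [huniv, Finset.card_univ, Finset.card_singleton, G.card_neighborFinset_eq_degree] at hcard
  have := h.1
  omega

end Separation

section RegularCliques

variable {V : Type*} [Fintype V] {G : SimpleGraph V} [DecidableRel G.Adj] {k : ℕ}

theorem erase_union_subset_neighborFinset [DecidableEq V] {K L : Finset V} (hK : G.IsClique K)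
    (hL : G.IsClique L) {v : V} (hvK : v ∈ K) (hvL : v ∈ L) :
    (K ∪ L).erase v ⊆ G.neighborFinset v := by
  intro u hu
  rw [Finset.mem_erase, Finset.mem_union] at hu
  rw [SimpleGraph.mem_neighborFinset]
  exact hu.2.elim (hK hvK · hu.1.symm) (hL hvL · hu.1.symm)

/-- Two different `k`-cliques through `v` share `k - 1` vertices, all of whose neighbours lie in
the union, so that the two remaining vertices of the union separate the graph. -/
theorem KConnected.isNClique_eq_of_mem (h : KConnected G k)
    (hreg : G.IsRegularOfDegree k) (hk : 3 ≤ k) (hV : k + 1 < Fintype.card V) {K L : Finset V}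
    (hK : G.IsNClique k K) (hL : G.IsNClique k L) {v : V} (hvK : v ∈ K) (hvL : v ∈ L) :
    K = L := by
  classical
  by_contra hne
  have hsub : ∀ w ∈ K ∩ L, (K ∪ L).erase w ⊆ G.neighborFinset w := fun w hw =>
    erase_union_subset_neighborFinset hK.isClique hL.isClique (Finset.mem_inter.mp hw).1
      (Finset.mem_inter.mp hw).2
  have hv : v ∈ K ∩ L := Finset.mem_inter.mpr ⟨hvK, hvL⟩
  have hcard_erase : ∀ w ∈ K ∩ L, ((K ∪ L).erase w).card = (K ∪ L).card - 1 := fun w hw =>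
    Finset.card_erase_of_mem (Finset.inter_subset_union hw)
  have hle : (K ∪ L).card ≤ k + 1 := by
    have := Finset.card_le_card (hsub v hv)
    rw [hcard_erase v hv, G.card_neighborFinset_eq_degree, hreg v] at this
    omega
  have hlt : k < (K ∪ L).card := by
    rw [← hK.card_eq]
    refine Finset.card_lt_card (Finset.subset_union_left.ssubset_of_ne fun heq => hne ?_)
    exact (Finset.eq_of_subset_of_card_le (Finset.union_eq_left.mp heq.symm)
      (hK.card_eq.trans hL.card_eq.symm).le).symm
  have hinter := Finset.card_union_add_card_inter K L
  rw [hK.card_eq, hL.card_eq] at hinter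
  have hdiff := Finset.card_sdiff_add_card_eq_card (Finset.inter_subset_union (s := K) (t := L))
  have huniv := h.union_eq_univ (A := K ∩ L) (S := (K ∪ L) \ (K ∩ L)) hv (by simp [hvK, hvL])
    (by omega) fun u hu w huw => by
      have hnbr : (K ∪ L).erase u = G.neighborFinset u := by
        refine Finset.eq_of_subset_of_card_le (hsub u hu) ?_
        rw [hcard_erase u hu, G.card_neighborFinset_eq_degree, hreg u]
        omega
      rw [Finset.union_sdiff_of_subset Finset.inter_subset_union]
      exact Finset.mem_of_mem_erase (hnbr ▸ (G.mem_neighborFinset u w).mpr huw)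
  rw [Finset.union_sdiff_of_subset Finset.inter_subset_union] at huniv
  rw [huniv, Finset.card_univ] at hle
  omega

theorem KConnected.dvd_card_of_forall_mem_isNClique (h : KConnected G k)
    (hreg : G.IsRegularOfDegree k) (hk : 3 ≤ k) (hV : k + 1 < Fintype.card V)
    (hcover : ∀ v, ∃ K, G.IsNClique k K ∧ v ∈ K) : k ∣ Fintype.card V := by
  classical
  choose K hK hmem using hcover
  have hfiber : ∀ v, Finset.univ.filter (K · = K v) = K v := fun v => by
    ext w
    rw [Finset.mem_filter_univ]
    exact ⟨fun hw => hw ▸ hmem w,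
      fun hw => h.isNClique_eq_of_mem hreg hk hV (hK w) (hK v) (hmem w) hw⟩
  rw [← Finset.card_univ, Finset.card_eq_sum_card_image K]
  refine Finset.dvd_sum fun L hL => ?_
  obtain ⟨v, -, rfl⟩ := Finset.mem_image.mp hL
  rw [hfiber, (hK v).card_eq]

end RegularCliques

section LocalStructure

variable {V : Type*} {G : SimpleGraph V}

theorem exists_finset_two_adj_of_not_isAcyclic (h : ¬ G.IsAcyclic) :
    ∃ T : Finset V, T.Nonempty ∧
      ∀ x ∈ T, ∃ y ∈ T, ∃ z ∈ T, y ≠ z ∧ G.Adj x y ∧ G.Adj x z := by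
  classical
  obtain ⟨u, p, hp⟩ : ∃ u, ∃ p : G.Walk u u, p.IsCycle := by
    simpa [SimpleGraph.IsAcyclic] using h
  have hsupport : ∀ {x y}, p.toSubgraph.Adj x y → y ∈ p.support.toFinset := fun hxy =>
    List.mem_toFinset.mpr (p.mem_verts_toSubgraph.mp hxy.snd_mem)
  refine ⟨p.support.toFinset, ⟨u, by simp⟩, fun x hx => ?_⟩
  obtain ⟨y, z, hyz, hxyz⟩ := Set.ncard_eq_two.mp
    (hp.ncard_neighborSet_toSubgraph_eq_two (List.mem_toFinset.mp hx))
  have hy : p.toSubgraph.Adj x y := hxyz.ge (Set.mem_insert y {z})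
  have hz : p.toSubgraph.Adj x z := hxyz.ge (Set.mem_insert_of_mem y rfl)
  exact ⟨y, hsupport hy, z, hsupport hz, hyz, hy.adj_sub, hz.adj_sub⟩

theorem LocallyNonforesty.exists_finset_two_adj (h : LocallyNonforesty G) (v : V) :
    ∃ T : Finset V, T.Nonempty ∧ (∀ x ∈ T, G.Adj v x) ∧
      ∀ x ∈ T, ∃ y ∈ T, ∃ z ∈ T, y ≠ z ∧ G.Adj x y ∧ G.Adj x z := by
  obtain ⟨T, hne, hT⟩ := exists_finset_two_adj_of_not_isAcyclic (h v)
  refine ⟨T.map (.subtype _), hne.map, ?_, ?_⟩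
  · simp +contextual
  · rintro _ hx'
    obtain ⟨x, hx, rfl⟩ := Finset.mem_map.mp hx'
    obtain ⟨y, hy, z, hz, hyz, hxy, hxz⟩ := hT x hx
    exact ⟨y, Finset.mem_map_of_mem _ hy, z, Finset.mem_map_of_mem _ hz,
      Subtype.coe_ne_coe.mpr hyz, hxy, hxz⟩

theorem LocallyNonforesty.of_forall_mem_isNClique_four
    (h : ∀ v, ∃ K, G.IsNClique 4 K ∧ v ∈ K) : LocallyNonforesty G := by
  classical
  intro v hv
  obtain ⟨K, hK, hvK⟩ := h v
  refine (SimpleGraph.cliqueFree_induce_iff _ _ _).mp (hv.cliqueFree le_rfl) ?_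
    (hK.erase_of_mem hvK)
  intro x hx
  rw [Finset.mem_coe, Finset.mem_erase] at hx
  exact hK.isClique hvK hx.2 hx.1.symm

/-- Consecutive vertices of a cycle in the neighbourhood of `v`, whose chords would close up a
4-clique. -/
theorem LocallyNonforesty.exists_isNClique_four_or_path (h : LocallyNonforesty G) (v : V) :
    (∃ K, G.IsNClique 4 K ∧ v ∈ K) ∨
      ∃ a b c d, G.Adj v a ∧ G.Adj v b ∧ G.Adj v c ∧ G.Adj v d ∧
        G.Adj d a ∧ G.Adj a b ∧ G.Adj b c ∧ ¬ G.Adj d b ∧ ¬ G.Adj a c ∧ a ≠ c ∧ b ≠ d := by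
  classical
  rw [or_iff_not_imp_left]
  intro hno
  have htriangle : ∀ {x y z}, G.Adj v x → G.Adj v y → G.Adj v z → G.Adj x y → G.Adj y z →
      ¬ G.Adj x z := fun {x y z} hx hy hz hxy hyz hxz =>
    hno ⟨insert v {x, y, z}, (SimpleGraph.is3Clique_triple_iff.mpr ⟨hxy, hxz, hyz⟩).insert
      (by simp [hx, hy, hz]), Finset.mem_insert_self _ _⟩
  obtain ⟨T, ⟨a, ha⟩, hT, hcycle⟩ := h.exists_finset_two_adj v
  obtain ⟨d, hd, b, hb, hdb, had, hab⟩ := hcycle a ha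
  obtain ⟨c, hc, hac, hbc⟩ : ∃ c ∈ T, a ≠ c ∧ G.Adj b c := by
    obtain ⟨y, hy, z, hz, hyz, hby, hbz⟩ := hcycle b hb
    by_cases hay : a = y
    · exact ⟨z, hz, hay ▸ hyz, hbz⟩
    · exact ⟨y, hy, hay, hby⟩
  exact ⟨a, b, c, d, hT a ha, hT b hb, hT c hc, hT d hd, had.symm, hab, hbc,
    htriangle (hT d hd) (hT a ha) (hT b hb) had.symm hab,
    htriangle (hT a ha) (hT b hb) (hT c hc) hab hbc, hac, hdb.symm⟩

variable [Fintype V] [DecidableRel G.Adj]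

theorem LocallyNonforesty.adj_of_neighborFinset_eq [DecidableEq V] (h : LocallyNonforesty G)
    {a x v b d : V} (hNa : G.neighborFinset a = {x, v, b, d}) (hxv : ¬ G.Adj x v)
    (hbd : ¬ G.Adj b d) : G.Adj x b := by
  obtain ⟨T, ⟨t, ht⟩, hT, hcycle⟩ := h.exists_finset_two_adj a
  have hmem : ∀ y ∈ T, y = x ∨ y = v ∨ y = b ∨ y = d := fun y hy => by
    simpa [← SimpleGraph.mem_neighborFinset, hNa] using hT y hy
  have hpair : ∀ u ∈ T, ∀ p q, (∀ y ∈ T, G.Adj u y → y = p ∨ y = q) → p ∈ T ∧ G.Adj u p := by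
    intro u hu p q hpq
    obtain ⟨y, hy, z, hz, hyz, huy, huz⟩ := hcycle u hu
    rcases hpq y hy huy with rfl | rfl
    · exact ⟨hy, huy⟩
    · obtain rfl := (hpq z hz huz).resolve_right hyz.symm
      exact ⟨hz, huz⟩
  have hx : x ∈ T → b ∈ T ∧ G.Adj x b := fun hxT => hpair x hxT b d fun y hy hxy => by
    rcases hmem y hy with rfl | rfl | h
    exacts [absurd rfl hxy.ne, absurd hxy hxv, h]
  have hv : v ∈ T → b ∈ T ∧ G.Adj v b := fun hvT => hpair v hvT b d fun y hy hvy => by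
    rcases hmem y hy with rfl | rfl | h
    exacts [absurd hvy.symm hxv, absurd rfl hvy.ne, h]
  have hb : b ∈ T → x ∈ T ∧ G.Adj b x := fun hbT => hpair b hbT x v fun y hy hby => by
    rcases hmem y hy with h | h | rfl | rfl
    exacts [.inl h, .inr h, absurd rfl hby.ne, absurd hby hbd]
  have hd : d ∈ T → x ∈ T ∧ G.Adj d x := fun hdT => hpair d hdT x v fun y hy hdy => by
    rcases hmem y hy with h | h | rfl | rfl
    exacts [.inl h, .inr h, absurd hdy.symm hbd, absurd rfl hdy.ne]
  rcases hmem t ht with rfl | rfl | rfl | rfl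
  exacts [(hx ht).2, (hb (hv ht).1).2.symm, (hb ht).2.symm, (hx (hd ht).1).2]

theorem LocallyNonforesty.exists_neighborFinset_eq_of_degree_eq_four [DecidableEq V]
    (h : LocallyNonforesty G) {v a b d : V} (hdeg : G.degree a = 4)
    (hav : G.Adj a v) (hab : G.Adj a b) (had : G.Adj a d)
    (hvb : v ≠ b) (hvd : v ≠ d) (hbd : b ≠ d) (hnbd : ¬ G.Adj b d)
    (hv : ∀ x, G.Adj a x → G.Adj v x → x = b ∨ x = d) :
    ∃ x, x ≠ v ∧ G.neighborFinset a = {x, v, b, d} ∧ G.Adj x b := by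
  obtain ⟨x, hx, hNa⟩ : ∃ x ∉ ({v, b, d} : Finset V),
      insert x {v, b, d} = G.neighborFinset a := by
    refine Finset.exists_eq_insert_iff.mpr ⟨?_, ?_⟩
    · simp [Finset.insert_subset_iff, hav, hab, had]
    · rw [Finset.card_eq_three.mpr ⟨v, b, d, hvb, hvd, hbd, rfl⟩,
        G.card_neighborFinset_eq_degree, hdeg]
  refine ⟨x, fun hxv => hx (by simp [hxv]), hNa.symm,
    h.adj_of_neighborFinset_eq hNa.symm (fun hxv => hx ?_) hnbd⟩
  have hax : G.Adj a x := by simp [← SimpleGraph.mem_neighborFinset, ← hNa]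
  rcases hv x hax hxv.symm with rfl | rfl <;> simp

theorem KConnected.card_le_six_of_neighborFinset_eq [DecidableEq V] (hconn : KConnected G 4)
    {v a b c d x : V} (hxv : x ≠ v) (hNv : G.neighborFinset v = {a, b, c, d})
    (hNa : G.neighborFinset a = {x, v, b, d}) (hNb : G.neighborFinset b = {v, a, c, x}) :
    Fintype.card V ≤ 6 := by
  have hv : v ∉ ({a, b, c, d} : Finset V) := hNv ▸ G.notMem_neighborFinset_self v
  have huniv := hconn.union_eq_univ (A := {v, a, b}) (S := {c, d, x}) (a := v) (by simp)
    (by grind) (Nat.lt_succ_of_le Finset.card_le_three) <| by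
      intro u hu w huw
      rw [← SimpleGraph.mem_neighborFinset] at huw
      simp only [Finset.mem_insert, Finset.mem_singleton] at hu
      rcases hu with rfl | rfl | rfl <;> grind
  rw [← Finset.card_univ, ← huniv]
  exact (Finset.card_union_le _ _).trans (add_le_add Finset.card_le_three Finset.card_le_three)

/-- The path `d a b c` in the neighbourhood of `v` forces a further vertex `x` adjacent to both `a`
and `b`; then `c`, `d` and `x` separate `v`, `a`, `b` from the rest. -/
theorem LocallyNonforesty.exists_isNClique_four_mem (h : LocallyNonforesty G)
    (hconn : KConnected G 4) (hreg : G.IsRegularOfDegree 4) (hV : 6 < Fintype.card V) (v : V) :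
    ∃ K, G.IsNClique 4 K ∧ v ∈ K := by
  classical
  refine (h.exists_isNClique_four_or_path v).resolve_right ?_
  rintro ⟨a, b, c, d, hva, hvb, hvc, hvd, hda, hab, hbc, hndb, hnac, hac, hbd⟩
  have hNv : G.neighborFinset v = {a, b, c, d} := by
    refine (Finset.eq_of_subset_of_card_le ?_ ?_).symm
    · simp [Finset.insert_subset_iff, hva, hvb, hvc, hvd]
    · have hcd : c ≠ d := by rintro rfl; exact hnac hda.symm
      simp [hreg v, hab.ne, hac, hda.ne', hbc.ne, hbd, hcd]
  have hmemNv : ∀ y, G.Adj v y → y = a ∨ y = b ∨ y = c ∨ y = d := fun y hy => by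
    simpa [← SimpleGraph.mem_neighborFinset, hNv] using hy
  obtain ⟨x, hxv, hNa, hxb⟩ := h.exists_neighborFinset_eq_of_degree_eq_four (hreg a)
    hva.symm hab hda.symm hvb.ne hvd.ne hbd (mt SimpleGraph.Adj.symm hndb) fun y hay hvy => by
      rcases hmemNv y hvy with rfl | hy | rfl | hy
      exacts [absurd rfl hay.ne, .inl hy, absurd hay hnac, .inr hy]
  have hax : G.Adj a x := by simp [← SimpleGraph.mem_neighborFinset, hNa]
  have hNb : G.neighborFinset b = {v, a, c, x} := by
    refine (Finset.eq_of_subset_of_card_le ?_ ?_).symm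
    · simp [Finset.insert_subset_iff, hvb.symm, hab.symm, hbc, hxb.symm]
    · have hcx : c ≠ x := by rintro rfl; exact hnac hax
      simp [hreg b, hva.ne, hvc.ne, hxv.symm, hac, hax.ne, hcx]
  exact hV.not_ge (hconn.card_le_six_of_neighborFinset_eq hxv hNv hNa hNb)

end LocalStructure

section Size

variable {V : Type*} [Fintype V] {G : SimpleGraph V} {k : ℕ}

theorem mul_card_le_two_mul_ncard_edgeSet [DecidableRel G.Adj] (h : ∀ v, k ≤ G.degree v) :
    k * Fintype.card V ≤ 2 * G.edgeSet.ncard := by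
  rw [← SimpleGraph.coe_edgeFinset, Set.ncard_coe_finset, ← G.sum_degrees_eq_twice_card_edges,
    mul_comm, ← Finset.card_univ, ← smul_eq_mul]
  exact Finset.card_nsmul_le_sum _ _ _ fun v _ => h v

theorem isRegularOfDegree_of_two_mul_ncard_edgeSet_le [DecidableRel G.Adj]
    (h : ∀ v, k ≤ G.degree v) (hle : 2 * G.edgeSet.ncard ≤ k * Fintype.card V) :
    G.IsRegularOfDegree k := by
  rw [← SimpleGraph.coe_edgeFinset, Set.ncard_coe_finset,
    ← G.sum_degrees_eq_twice_card_edges] at hle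
  have hsum : ∑ _v : V, k = ∑ v, G.degree v :=
    le_antisymm (Finset.sum_le_sum fun v _ => h v) (by simpa [mul_comm] using hle)
  exact fun v => ((Finset.sum_eq_sum_iff_of_le fun v _ => h v).mp hsum v (Finset.mem_univ v)).symm

theorem LocallyNonforesty.le_ncard_edgeSet (h : LocallyNonforesty G) (hconn : KConnected G 4)
    (hV : 6 < Fintype.card V) :
    (if Fintype.card V % 4 = 0 then 2 * Fintype.card V else 2 * Fintype.card V + 1) ≤
      G.edgeSet.ncard := by
  classical
  have hle := mul_card_le_two_mul_ncard_edgeSet hconn.le_degree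
  split_ifs with hmod
  · omega
  · by_contra! hlt
    have hreg := isRegularOfDegree_of_two_mul_ncard_edgeSet_le hconn.le_degree (by omega)
    have hdvd := hconn.dvd_card_of_forall_mem_isNClique hreg (by norm_num) (by omega)
      (h.exists_isNClique_four_mem hconn hreg hV)
    omega

end Size

section StepGraph

/-- The graph on `Fin n`, read modulo `n`, in which every `x` is joined to `x + d` for `d ∈ D x`. -/
def stepGraph (n : ℕ) [NeZero n] (D : ℕ → Finset ℕ) : SimpleGraph (Fin n) :=
  .fromRel fun x y => ∃ d ∈ D x, Fin.ofNat n (x + d) = y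

variable {n : ℕ} [NeZero n] {D : ℕ → Finset ℕ}

theorem finOfNat_eq_finOfNat_iff {x y : ℕ} : Fin.ofNat n x = Fin.ofNat n y ↔ x ≡ y [MOD n] :=
  Fin.ext_iff

theorem finOfNat_add_ne {x d : ℕ} (h0 : 0 < d) (hd : d < n) :
    Fin.ofNat n x ≠ Fin.ofNat n (x + d) := fun h =>
  h0.ne ((Nat.ModEq.add_left_cancel' x (finOfNat_eq_finOfNat_iff.mp h : x + 0 ≡ x + d [MOD n])
    ).eq_of_lt_of_lt (h0.trans hd) hd)

theorem stepGraph_adj_add {x d : ℕ} (h0 : 0 < d) (hd : d < n) (hx : d ∈ D (x % n)) :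
    (stepGraph n D).Adj (Fin.ofNat n x) (Fin.ofNat n (x + d)) := by
  rw [stepGraph, SimpleGraph.fromRel_adj]
  exact ⟨finOfNat_add_ne h0 hd, .inl ⟨d, hx, finOfNat_eq_finOfNat_iff.mpr (by simp [Nat.ModEq])⟩⟩

theorem edgeSet_stepGraph (hD : ∀ x, ∀ d ∈ D x, 0 < d ∧ d < n) :
    (stepGraph n D).edgeSet = ↑((Finset.univ.sigma fun x : Fin n => D x).image
      fun p => s(p.1, Fin.ofNat n (p.1 + p.2))) := by
  ext e
  induction e with | _ x y
  rw [SimpleGraph.mem_edgeSet, Finset.mem_coe, Finset.mem_image]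
  constructor
  · rintro ⟨-, ⟨d, hd, rfl⟩ | ⟨d, hd, rfl⟩⟩
    · exact ⟨⟨x, d⟩, by simpa using hd, rfl⟩
    · exact ⟨⟨y, d⟩, by simpa using hd, Sym2.eq_swap⟩
  · rintro ⟨⟨z, d⟩, hd, hz⟩
    have hdz : d ∈ D z := by simpa using hd
    have hadj := stepGraph_adj_add (n := n) (x := z) (hD z d hdz).1 (hD z d hdz).2
      (by rwa [Nat.mod_eq_of_lt z.2])
    rwa [Fin.ofNat_val_eq_self, ← SimpleGraph.mem_edgeSet, hz] at hadj

theorem ncard_edgeSet_stepGraph (hD : ∀ x, ∀ d ∈ D x, 0 < d ∧ 2 * d < n) :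
    (stepGraph n D).edgeSet.ncard = ∑ x ∈ Finset.range n, (D x).card := by
  rw [edgeSet_stepGraph fun x d hd => ⟨(hD x d hd).1, by have := hD x d hd; omega⟩,
    Set.ncard_coe_finset, Finset.card_image_of_injOn, Finset.card_sigma,
    Fin.sum_univ_eq_sum_range fun x => (D x).card]
  rintro ⟨x, d⟩ hd ⟨y, e⟩ he h
  have hdx := hD x d (by simpa using hd)
  have hey := hD y e (by simpa using he)
  rcases Sym2.eq_iff.mp h with ⟨rfl, h⟩ | ⟨hx, hy⟩
  · have hde : d ≡ e [MOD n] := Nat.ModEq.add_left_cancel' x (finOfNat_eq_finOfNat_iff.mp h)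
    obtain rfl : d = e := hde.eq_of_lt_of_lt (by omega) (by omega)
    rfl
  · have hx' : (x : ℕ) ≡ y + e [MOD n] :=
      finOfNat_eq_finOfNat_iff.mp ((Fin.ofNat_val_eq_self x).trans hx)
    have hy' : (x + d : ℕ) ≡ y [MOD n] :=
      finOfNat_eq_finOfNat_iff.mp (hy.trans (Fin.ofNat_val_eq_self y).symm)
    have hround : (y : ℕ) ≡ y + (e + d) [MOD n] := by
      simpa only [add_assoc] using hy'.symm.trans (hx'.add_right d)
    exact absurd (finOfNat_eq_finOfNat_iff.mpr hround) (finOfNat_add_ne (by omega) (by omega))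

end StepGraph

section CyclicCliques

/-- Propagate from `0` up to the exceptional index and from `k` down to it. -/
theorem forall_le_of_forall_ne_iff_succ {P : ℕ → Prop} {k j : ℕ} (h0 : P 0) (hk : P k)
    (hstep : ∀ i < k, i ≠ j → (P i ↔ P (i + 1))) {i : ℕ} (hi : i ≤ k) : P i := by
  rcases le_or_gt i j with hij | hji
  · induction i with
    | zero => exact h0
    | succ i ih => exact (hstep i (by omega) (by omega)).mp (ih (by omega) (by omega))
  · induction hi using Nat.decreasingInduction with
    | self => exact hk
    | of_succ i hi ih => exact (hstep i hi hji.ne').mpr (ih (by omega))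

theorem reachable_of_isClique {V : Type*} {G : SimpleGraph V} {K : Set V} (hK : G.IsClique K)
    {a b : V} (ha : a ∈ K) (hb : b ∈ K) : G.Reachable a b := by
  by_cases hab : a = b
  · exact hab ▸ .rfl
  · exact (hK ha hb hab).reachable

theorem connected_of_cyclic_isClique {V : Type*} {G : SimpleGraph V} {C : ℕ → Set V} {k j : ℕ}
    (hC : ∀ i, G.IsClique (C i)) (hcover : ∀ v, ∃ i < k, v ∈ C i) (hclosed : C k = C 0)
    (hne : (C 0).Nonempty)
    (hstep : ∀ i < k, i ≠ j → ∃ a ∈ C i, ∃ b ∈ C (i + 1), G.Reachable a b) : G.Connected := by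
  obtain ⟨u, hu⟩ := hne
  have h0 : ∀ v ∈ C 0, G.Reachable u v := fun v hv => reachable_of_isClique (hC 0) hu hv
  refine SimpleGraph.connected_iff_exists_forall_reachable G |>.mpr ⟨u, fun v => ?_⟩
  obtain ⟨i, hi, hv⟩ := hcover v
  refine forall_le_of_forall_ne_iff_succ (P := fun i => ∀ v ∈ C i, G.Reachable u v) (j := j) h0
    (hclosed ▸ h0) (fun i hi hij => ?_) hi.le v hv
  obtain ⟨a, ha, b, hb, hab⟩ := hstep i hi hij
  exact ⟨fun h w hw => ((h a ha).trans hab).trans (reachable_of_isClique (hC _) hb hw),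
    fun h w hw => ((h b hb).trans hab.symm).trans (reachable_of_isClique (hC _) ha hw)⟩

end CyclicCliques

section CliqueRing

/-- The steps of `cliqueRing` at `x`: the vertices `4 * i, …, 4 * i + 3` form a clique, and
`4 * i + 2`, `4 * i + 3` are joined to `4 * i + 4`, `4 * i + 5`, respectively. -/
def ringSteps (x : ℕ) : Finset ℕ :=
  if x % 4 = 0 then {1, 2, 3} else if x % 4 = 3 then {2} else {1, 2}

/-- A ring of `⌈n / 4⌉` four-cliques on `n` vertices. If `4 ∤ n`, then the last clique shares
its last `4 * ⌈n / 4⌉ - n` vertices with the first one. -/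
def cliqueRing (n : ℕ) [NeZero n] : SimpleGraph (Fin n) :=
  stepGraph n ringSteps

theorem two_mem_ringSteps (x : ℕ) : 2 ∈ ringSteps x := by
  unfold ringSteps
  split_ifs <;> simp

theorem mem_ringSteps {x d : ℕ} (h0 : 0 < d) (hd : x % 4 + d < 4) : d ∈ ringSteps x := by
  unfold ringSteps
  grind

theorem mem_Icc_of_mem_ringSteps {x d : ℕ} (hd : d ∈ ringSteps x) : d ∈ Finset.Icc 1 3 := by
  unfold ringSteps at hd
  split_ifs at hd <;> grind

theorem sum_card_ringSteps (n : ℕ) :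
    ∑ x ∈ Finset.range n, (ringSteps x).card = if n % 4 = 0 then 2 * n else 2 * n + 1 := by
  induction n with
  | zero => rfl
  | succ n ih =>
    have hcard : (ringSteps n).card = if n % 4 = 0 then 3 else if n % 4 = 3 then 1 else 2 := by
      unfold ringSteps
      split_ifs <;> rfl
    rw [Finset.sum_range_succ, ih, hcard]
    split_ifs <;> omega

variable {n : ℕ} [NeZero n]

theorem ncard_edgeSet_cliqueRing (hn : 7 ≤ n) :
    (cliqueRing n).edgeSet.ncard = if n % 4 = 0 then 2 * n else 2 * n + 1 := by
  rw [← sum_card_ringSteps]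
  refine ncard_edgeSet_stepGraph fun x d hd => ?_
  have := Finset.mem_Icc.mp (mem_Icc_of_mem_ringSteps hd)
  omega

/-- The first vertex of the `i`-th clique of `cliqueRing n`, before reduction modulo `n`; the
clique of index `⌈n / 4⌉` is the one of index `0` again, shifted by `n`. -/
def blockStart (n i : ℕ) : ℕ := min (4 * i) n

/-- The `i`-th clique of `cliqueRing n`, for `i ≤ ⌈n / 4⌉`. -/
def ringBlock (n : ℕ) [NeZero n] (i : ℕ) : Finset (Fin n) :=
  (Finset.Ico (blockStart n i) (blockStart n i + 4)).image (Fin.ofNat n)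

theorem injOn_finOfNat (c : ℕ) : Set.InjOn (Fin.ofNat n) (Finset.Ico c (c + n)) :=
  fun _ hx _ hy h => Nat.mod_injOn_Ico c n hx hy (finOfNat_eq_finOfNat_iff.mp h)

theorem cliqueRing_adj_of_lt (hn : 4 ≤ n) {i x y : ℕ} (hx : blockStart n i ≤ x) (hxy : x < y)
    (hy : y < blockStart n i + 4) : (cliqueRing n).Adj (Fin.ofNat n x) (Fin.ofNat n y) := by
  have hmod : x % n % 4 ≤ x - blockStart n i := by
    unfold blockStart at *
    rcases lt_or_ge x n with hxn | hxn
    · rw [Nat.mod_eq_of_lt hxn]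
      omega
    · rw [Nat.mod_eq_sub_mod hxn, Nat.mod_eq_of_lt (by omega : x - n < n)]
      omega
  rw [← Nat.add_sub_of_le hxy.le]
  exact stepGraph_adj_add (by omega) (by omega) (mem_ringSteps (by omega) (by omega))

theorem isNClique_ringBlock (hn : 4 ≤ n) (i : ℕ) :
    (cliqueRing n).IsNClique 4 (ringBlock n i) := by
  constructor
  · intro u hu w hw hne
    obtain ⟨x, hx, rfl⟩ := Finset.mem_image.mp hu
    obtain ⟨y, hy, rfl⟩ := Finset.mem_image.mp hw
    rw [Finset.mem_Ico] at hx hy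
    rcases lt_trichotomy x y with hxy | rfl | hyx
    · exact cliqueRing_adj_of_lt hn hx.1 hxy hy.2
    · exact absurd rfl hne
    · exact (cliqueRing_adj_of_lt hn hy.1 hyx hx.2).symm
  · rw [ringBlock, Finset.card_image_of_injOn, Nat.card_Ico, Nat.add_sub_cancel_left]
    exact (injOn_finOfNat _).mono (Finset.coe_subset.mpr (Finset.Ico_subset_Ico_right (by omega)))

theorem exists_mem_ringBlock (x : Fin n) : ∃ i < (n + 3) / 4, x ∈ ringBlock n i := by
  refine ⟨x / 4, by omega, Finset.mem_image.mpr ⟨x, ?_, Fin.ofNat_val_eq_self x⟩⟩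
  simp only [blockStart, Finset.mem_Ico]
  omega

theorem locallyNonforesty_cliqueRing (hn : 4 ≤ n) : LocallyNonforesty (cliqueRing n) :=
  .of_forall_mem_isNClique_four fun x =>
    let ⟨i, _, hx⟩ := exists_mem_ringBlock x
    ⟨ringBlock n i, isNClique_ringBlock hn i, hx⟩

theorem ringBlock_ceil : ringBlock n ((n + 3) / 4) = ringBlock n 0 := by
  have hend : blockStart n ((n + 3) / 4) = 0 + n := by
    unfold blockStart
    omega
  have hstart : blockStart n 0 = 0 := Nat.zero_min n
  rw [ringBlock, ringBlock, hend, hstart, add_right_comm, ← Finset.image_add_right_Ico,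
    Finset.image_image]
  exact Finset.image_congr fun x _ => finOfNat_eq_finOfNat_iff.mpr (Nat.add_mod_right x n)

theorem card_le_card_of_finOfNat_mem {T : Finset ℕ} {S : Finset (Fin n)} (c : ℕ)
    (hT : T ⊆ Finset.Ico c (c + n)) (hS : ∀ x ∈ T, Fin.ofNat n x ∈ S) : T.card ≤ S.card :=
  Finset.card_le_card_of_injOn _ hS ((injOn_finOfNat c).mono (Finset.coe_subset.mpr hT))

/-- After deletion of `S`, the blocks `i` and `i + 1` of `cliqueRing n` still share a vertex, or
are joined by one of the edges of step two between them. -/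
def GapOpen (S : Finset (Fin n)) (i : ℕ) : Prop :=
  ∃ x ∈ Finset.Ico (blockStart n i) (blockStart n i + 4),
    ∃ y ∈ Finset.Ico (blockStart n (i + 1)) (blockStart n (i + 1) + 4),
      (x = y ∨ x + 2 = y) ∧ Fin.ofNat n x ∉ S ∧ Fin.ofNat n y ∉ S

variable {S : Finset (Fin n)} {i j : ℕ}

theorem GapOpen.exists_reachable (hn : 2 < n) (h : GapOpen S i) :
    ∃ a ∈ {u : ↥((S : Set (Fin n))ᶜ) | u.1 ∈ ringBlock n i},
      ∃ b ∈ {u : ↥((S : Set (Fin n))ᶜ) | u.1 ∈ ringBlock n (i + 1)},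
        ((cliqueRing n).induce (S : Set (Fin n))ᶜ).Reachable a b := by
  obtain ⟨x, hx, y, hy, hxy, hxS, hyS⟩ := h
  refine ⟨⟨_, hxS⟩, Finset.mem_image_of_mem (Fin.ofNat n) hx, ⟨_, hyS⟩,
    Finset.mem_image_of_mem (Fin.ofNat n) hy, ?_⟩
  rcases hxy with rfl | rfl
  · exact .rfl
  · exact SimpleGraph.Adj.reachable (stepGraph_adj_add two_pos hn (two_mem_ringSteps _))

theorem finOfNat_mem_or_of_not_gapOpen (h : ¬ GapOpen S i) (hi : 4 * i < n) {x y : ℕ}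
    (hx : x ∈ Finset.Ico (4 * i) (4 * i + 4))
    (hy : y ∈ Finset.Ico (min (4 * i + 4) n) (min (4 * i + 4) n + 4)) (hxy : x = y ∨ x + 2 = y) :
    Fin.ofNat n x ∈ S ∨ Fin.ofNat n y ∈ S := by
  by_contra! hS
  have hstart : blockStart n i = 4 * i := min_eq_left hi.le
  exact h ⟨x, by rwa [hstart], y, by rwa [blockStart, mul_add_one], hxy, hS⟩

theorem exists_even_odd_mem_of_not_gapOpen (h : ¬ GapOpen S i) (hi : 4 * i + 2 ≤ n) :
    ∃ c d, c % 2 = 0 ∧ d % 2 = 1 ∧ c ∈ Finset.Icc (4 * i + 2) (min (4 * i + 5) (n + 1)) ∧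
      d ∈ Finset.Icc (4 * i + 2) (min (4 * i + 5) (n + 1)) ∧
      Fin.ofNat n c ∈ S ∧ Fin.ofNat n d ∈ S := by
  have hlink := fun x y => finOfNat_mem_or_of_not_gapOpen (x := x) (y := y) h (by omega)
  simp only [Finset.mem_Ico, Finset.mem_Icc] at hlink ⊢
  have heven : ∃ c, c % 2 = 0 ∧ 4 * i + 2 ≤ c ∧ c ≤ min (4 * i + 5) (n + 1) ∧
      Fin.ofNat n c ∈ S := by
    rcases hi.eq_or_lt with hn | hn
    · have := hlink (4 * i + 2) (4 * i + 2) (by omega) (by omega) (by omega)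
      exact ⟨4 * i + 2, by omega, by omega, by omega, by tauto⟩
    · rcases hlink (4 * i + 2) (4 * i + 4) (by omega) (by omega) (by omega) with hS | hS
      exacts [⟨_, by omega, by omega, by omega, hS⟩, ⟨_, by omega, by omega, by omega, hS⟩]
  have hodd : ∃ d, d % 2 = 1 ∧ 4 * i + 2 ≤ d ∧ d ≤ min (4 * i + 5) (n + 1) ∧
      Fin.ofNat n d ∈ S := by
    rcases lt_or_ge n (4 * i + 4) with hn | hn
    · have := hlink (4 * i + 3) (4 * i + 3) (by omega) (by omega) (by omega)
      exact ⟨4 * i + 3, by omega, by omega, by omega, by tauto⟩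
    · rcases hlink (4 * i + 3) (4 * i + 5) (by omega) (by omega) (by omega) with hS | hS
      exacts [⟨_, by omega, by omega, by omega, hS⟩, ⟨_, by omega, by omega, by omega, hS⟩]
  obtain ⟨c, hc, hlec, hcle, hcS⟩ := heven
  obtain ⟨d, hd, hled, hdle, hdS⟩ := hodd
  exact ⟨c, d, hc, hd, ⟨hlec, hcle⟩, ⟨hled, hdle⟩, hcS, hdS⟩

theorem four_le_card_of_not_gapOpen (hn : 6 ≤ n) (hij : i < j) (hj : 4 * j < n)
    (hiS : ¬ GapOpen S i) (hjS : ¬ GapOpen S j) : 4 ≤ S.card := by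
  obtain ⟨c, d, hc, hd, hc', hd', hcS, hdS⟩ :=
    exists_even_odd_mem_of_not_gapOpen hiS (by omega)
  obtain ⟨T, hcard, hT, hS⟩ : ∃ T : Finset ℕ, T.card = 4 ∧ T ⊆ Finset.Ico 2 (2 + n) ∧
      ∀ x ∈ T, Fin.ofNat n x ∈ S := by
    rcases (show 4 * j + 1 = n ∨ 4 * j + 2 ≤ n by omega) with hjn | hjn
    · have hshared : ∀ x ∈ Finset.Ico n (n + 3), Fin.ofNat n x ∈ S := fun x hx => by
        rw [Finset.mem_Ico] at hx
        exact or_self_iff.mp <| finOfNat_mem_or_of_not_gapOpen hjS hj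
          (by rw [Finset.mem_Ico]; omega) (by rw [Finset.mem_Ico]; omega) (.inl rfl)
      have h2S : Fin.ofNat n 2 ∈ S := by
        rw [finOfNat_eq_finOfNat_iff.mpr (Nat.add_mod_left n 2).symm]
        exact hshared (n + 2) (by simp)
      by_cases hc2 : c = 2
      · exact ⟨{2, d, n, n + 1}, by grind, by grind, by grind⟩
      · exact ⟨{2, c, n, n + 1}, by grind, by grind, by grind⟩
    · obtain ⟨a, b, ha, hb, ha', hb', haS, hbS⟩ :=
        exists_even_odd_mem_of_not_gapOpen hjS (by omega)
      exact ⟨{c, d, a, b}, by grind, by grind, by grind⟩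
  exact hcard ▸ card_le_card_of_finOfNat_mem 2 hT hS

theorem exists_forall_ne_gapOpen (hn : 6 ≤ n) (hS : S.card < 4) :
    ∃ j, ∀ i, 4 * i < n → i ≠ j → GapOpen S i := by
  by_cases hall : ∀ i, 4 * i < n → GapOpen S i
  · exact ⟨0, fun i hi _ => hall i hi⟩
  · push Not at hall
    obtain ⟨j, hj, hjS⟩ := hall
    refine ⟨j, fun i hi hij => by_contra fun hiS => hS.not_ge ?_⟩
    rcases hij.lt_or_gt with hij | hji
    exacts [four_le_card_of_not_gapOpen hn hij hj hiS hjS,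
      four_le_card_of_not_gapOpen hn hji hi hjS hiS]

theorem kConnected_cliqueRing (hn : 6 ≤ n) : KConnected (cliqueRing n) 4 := by
  refine ⟨by rw [Fintype.card_fin]; omega, fun S hS => ?_⟩
  obtain ⟨j, hj⟩ := exists_forall_ne_gapOpen hn hS
  refine connected_of_cyclic_isClique (C := fun i => {u | u.1 ∈ ringBlock n i})
    (k := (n + 3) / 4) (j := j) (fun i u hu w hw huw => ?_) (fun u => exists_mem_ringBlock u.1)
    ?_ ?_ fun i hi hij => (hj i (by omega) hij).exists_reachable (by omega)
  · exact (isNClique_ringBlock (by omega) i).isClique hu hw (Subtype.coe_ne_coe.mpr huw)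
  · rw [ringBlock_ceil]
  · have hlt : S.card < (ringBlock n 0).card := by
      rwa [(isNClique_ringBlock (by omega) 0).card_eq]
    obtain ⟨u, hu, huS⟩ := Finset.exists_mem_notMem_of_card_lt_card hlt
    exact ⟨⟨u, huS⟩, hu⟩

end CliqueRing

theorem stmt_2_general (n : ℕ) (hn : 7 ≤ n) :
    IsLeast {m : ℕ | ∃ G : SimpleGraph (Fin n),
        KConnected G 4 ∧ LocallyNonforesty G ∧ G.edgeSet.ncard = m}
      (if n % 4 = 0 then 2 * n else 2 * n + 1) := by
  have : NeZero n := ⟨by omega⟩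
  constructor
  · exact ⟨cliqueRing n, kConnected_cliqueRing (by omega), locallyNonforesty_cliqueRing (by omega),
      ncard_edgeSet_cliqueRing hn⟩
  · rintro m ⟨G, hconn, hloc, rfl⟩
    simpa only [Fintype.card_fin] using
      hloc.le_ncard_edgeSet hconn (by rwa [Fintype.card_fin])

/-- `h n` is the least possible size: it is attained by some 4-connected locally
nonforesty graph of order `n`, and it is a lower bound for the sizes of all such graphs. -/
theorem stmt_2 (n : ℕ) (h8 : 8 ≤ n) :
    IsLeast {m : ℕ | ∃ G : SimpleGraph (Fin n),
        KConnected G 4 ∧ LocallyNonforesty G ∧ G.edgeSet.ncard = m}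
      (if n % 4 = 0 then 2 * n else 2 * n + 1) :=
  stmt_2_general n (by omega)
end

section
/- Let n ≥ 8 and let G be a 2-connected locally nonforesty graph of order n. Then the size of G is at least g(n), where g(n) = 2n − ⌊n/4⌋ if n ≡ 0 or 3 (mod 4), and g(n) = 2n + 1 − ⌊n/4⌋ otherwise. -/
/-!
Give every vertex `x` the charge `2 * deg x - 7`, so that the total charge is `4e - 7n`. Locally
nonforesty graphs have minimum degree three, and the neighbourhood of a vertex of degree three is a
triangle. Hence a neighbour of `x` of degree three has all its neighbours in the closed
neighbourhood of `x`, only the neighbours of `x` of degree at least four lead out of it, and by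
2-connectivity there are at least two of these unless `deg x = n - 1`. In particular a vertex of
degree three has two or three such neighbours, which pay its debt of `1` in equal shares. Shares of
`1/2` go to pairs of adjacent vertices of degree three, and this parity is what keeps the charge of
a vertex of degree four nonnegative. So `4e ≥ 7n`.

The bound claimed says moreover that `4e - 7n` is neither `1` nor `2`. If the total charge is at
most `2`, counting vertices of odd degree excludes first the shares of `1/3` and then the degrees
above four. A vertex that keeps a positive charge then has degree four and no neighbour of degree
three, and a cycle in its neighbourhood produces enough such vertices to exceed the total.
-/

open Finset

section SimpleGraph

variable {V : Type*} [Fintype V]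

lemma KConnected.eq_univ_of_forall_adj_mem {G : SimpleGraph V} {k : ℕ} (hG : KConnected G k)
    {S W : Finset V} (hS : #S < k) (hSW : S ⊂ W)
    (hW : ∀ v ∈ W, v ∉ S → ∀ w, G.Adj v w → w ∈ W) : W = univ := by
  obtain ⟨v, hvW, hvS⟩ := exists_of_ssubset hSW
  rw [eq_univ_iff_forall]
  by_contra! h
  obtain ⟨w, hwW⟩ := h
  obtain ⟨p⟩ := (hG.2 S hS).preconnected ⟨v, by simpa using hvS⟩
    ⟨w, by simpa using fun h ↦ hwW (hSW.subset h)⟩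
  obtain ⟨d, -, hfst, hsnd⟩ := p.exists_boundary_dart {a | (a : V) ∈ W} hvW hwW
  exact hsnd (hW _ hfst (fun h ↦ d.fst.2 (mem_coe.2 h)) _ d.adj)

lemma sum_card_filter_neighborFinset_comm (G : SimpleGraph V) [DecidableRel G.Adj]
    (P Q : V → Prop) [DecidablePred P] [DecidablePred Q] :
    ∑ x with P x, #{v ∈ G.neighborFinset x | Q v} =
      ∑ v with Q v, #{x ∈ G.neighborFinset v | P x} := by
  convert sum_card_bipartiteAbove_eq_sum_card_bipartiteBelow G.Adj
    (s := {x | P x}) (t := {v | Q v}) using 3 <;> ext w <;>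
  simp [bipartiteAbove, bipartiteBelow, G.adj_comm, and_comm]

variable [DecidableEq V] {G : SimpleGraph V} [DecidableRel G.Adj]

lemma KConnected.card_le_degree_add_one {k : ℕ} (hG : KConnected G k) {x : V} {S : Finset V}
    (hS : #S < k) (hSx : S ⊆ G.neighborFinset x)
    (h : ∀ v, G.Adj x v → v ∉ S → G.neighborFinset v ⊆ insert x (G.neighborFinset x)) :
    Fintype.card V ≤ G.degree x + 1 := by
  have hx : x ∉ G.neighborFinset x := by simp
  have huniv : insert x (G.neighborFinset x) = univ := by
    refine hG.eq_univ_of_forall_adj_mem hS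
      (hSx.trans_ssubset (ssubset_insert hx)) fun v hv hvS w hvw ↦ ?_
    rcases mem_insert.1 hv with rfl | hxv
    · simp [hvw]
    · exact h v (by simpa using hxv) hvS (by simpa using hvw)
  rw [← card_univ, ← huniv, ← G.card_neighborFinset_eq_degree]
  exact card_insert_le _ _

lemma two_le_card_neighborFinset_inter_support {u c : V} {p : G.Walk u u} (hp : p.IsCycle)
    (hc : c ∈ p.support) : 2 ≤ #(G.neighborFinset c ∩ p.support.toFinset) := by
  rw [← hp.ncard_neighborSet_toSubgraph_eq_two hc, ← Set.ncard_coe_finset]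
  refine Set.ncard_le_ncard (fun w hw ↦ ?_) (finite_toSet _)
  have hcw : p.toSubgraph.Adj c w := hw
  simpa using ⟨hcw.adj_sub, p.mem_verts_toSubgraph.1 hcw.snd_mem⟩

lemma lt_card_of_forall_le_card_neighborFinset_inter {C : Finset V} {k : ℕ} (hne : C.Nonempty)
    (hC : ∀ c ∈ C, k ≤ #(G.neighborFinset c ∩ C)) : k < #C := by
  obtain ⟨c, hc⟩ := hne
  refine (hC c hc).trans_lt (card_lt_card ⟨inter_subset_right, fun h ↦ ?_⟩)
  simpa using h hc

lemma isClique_of_forall_card_le_card_neighborFinset_inter {C : Finset V}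
    (hC : ∀ c ∈ C, #C ≤ #(G.neighborFinset c ∩ C) + 1) : G.IsClique C := by
  intro a ha b hb hab
  have hsub : G.neighborFinset a ∩ C ⊆ C.erase a := fun w hw ↦ by
    simp only [mem_inter, SimpleGraph.mem_neighborFinset] at hw
    exact mem_erase.2 ⟨hw.1.ne', hw.2⟩
  have heq : G.neighborFinset a ∩ C = C.erase a := by
    refine eq_of_subset_of_card_le hsub ?_
    rw [card_erase_of_mem ha]
    have := hC a ha
    lia
  have hb' : b ∈ G.neighborFinset a ∩ C := heq ▸ mem_erase.2 ⟨hab.symm, hb⟩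
  simpa using (mem_inter.1 hb').1

lemma even_card_of_forall_odd_card_neighborFinset_inter {s : Finset V}
    (hs : ∀ v ∈ s, Odd #(G.neighborFinset v ∩ s)) : Even #s := by
  have hdeg (v : (s : Set V)) :
      (G.induce (s : Set V)).degree v = #(G.neighborFinset (v : V) ∩ s) := by
    rw [← SimpleGraph.card_neighborFinset_eq_degree,
      ← card_map (.subtype (· ∈ (s : Set V)))]
    congr 1
    ext w
    simp [and_comm]
  have heven := (G.induce (s : Set V)).even_card_odd_degree_vertices
  rw [filter_true_of_mem fun v _ ↦ (hdeg v).symm ▸ hs v v.2] at heven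
  simpa using heven

end SimpleGraph

section Discharging

variable {V : Type*} [Fintype V] (G : SimpleGraph V) [DecidableRel G.Adj]

/-- The neighbours of `x` that take part in the payment of debts, those of degree at least four. -/
def heavyNbrs (x : V) : Finset V := {w ∈ G.neighborFinset x | 4 ≤ G.degree w}

/-- A vertex of degree three whose debt is shared by two heavy neighbours. Its third neighbour is
then of the same kind (`LocallyNonforesty.card_pairedNbrs_eq_one`), whence the name. -/
def IsPaired (v : V) : Prop := G.degree v = 3 ∧ #(heavyNbrs G v) = 2

/-- A vertex of degree three whose debt is shared by three heavy neighbours. -/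
def IsLone (v : V) : Prop := G.degree v = 3 ∧ #(heavyNbrs G v) = 3

instance : DecidablePred (IsPaired G) := fun _ ↦ inferInstanceAs (Decidable (_ ∧ _))

instance : DecidablePred (IsLone G) := fun _ ↦ inferInstanceAs (Decidable (_ ∧ _))

/-- The neighbours to which a heavy vertex `x` pays a share of `1/2`. -/
def pairedNbrs (x : V) : Finset V := {v ∈ G.neighborFinset x | IsPaired G v}

/-- The neighbours to which a heavy vertex `x` pays a share of `1/3`. -/
def loneNbrs (x : V) : Finset V := {v ∈ G.neighborFinset x | IsLone G v}

/-- The charge that a heavy vertex `x` keeps after its payments, scaled by `6` so that it becomes an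
integer: `6 * (2 * deg x - 7 - a / 2 - b / 3)` for `a` paired and `b` lone neighbours. -/
def excess (x : V) : ℤ :=
  12 * G.degree x - 42 - 3 * #(pairedNbrs G x) - 2 * #(loneNbrs G x)

/-- The charge, scaled by `6`, that all heavy vertices together keep. -/
def totalExcess : ℤ := ∑ x with 4 ≤ G.degree x, excess G x

variable {G}

@[simp]
lemma mem_heavyNbrs {x w : V} : w ∈ heavyNbrs G x ↔ G.Adj x w ∧ 4 ≤ G.degree w := by
  simp [heavyNbrs]

@[simp]
lemma mem_pairedNbrs {x v : V} : v ∈ pairedNbrs G x ↔ G.Adj x v ∧ IsPaired G v := by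
  simp [pairedNbrs]

@[simp]
lemma mem_loneNbrs {x v : V} : v ∈ loneNbrs G x ↔ G.Adj x v ∧ IsLone G v := by
  simp [loneNbrs]

lemma heavyNbrs_subset_neighborFinset (x : V) : heavyNbrs G x ⊆ G.neighborFinset x :=
  filter_subset _ _

lemma IsPaired.not_isLone {v : V} (hv : IsPaired G v) : ¬ IsLone G v := fun h ↦ by
  have h2 := hv.2
  have h3 := h.2
  lia

lemma IsLone.heavyNbrs_eq {v : V} (hv : IsLone G v) : heavyNbrs G v = G.neighborFinset v :=
  eq_of_subset_of_card_le (heavyNbrs_subset_neighborFinset v)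
    (by rw [G.card_neighborFinset_eq_degree, hv.1, hv.2])

lemma IsLone.four_le_degree_of_adj {v w : V} (hv : IsLone G v) (hvw : G.Adj v w) :
    4 ≤ G.degree w := by
  have hw : w ∈ heavyNbrs G v := by simpa [hv.heavyNbrs_eq] using hvw
  exact (mem_heavyNbrs.1 hw).2

namespace LocallyNonforesty

lemma exists_forall_two_le_card_neighborFinset_inter [DecidableEq V] (hG : LocallyNonforesty G)
    (v : V) : ∃ C ⊆ G.neighborFinset v, 2 < #C ∧ ∀ c ∈ C, 2 ≤ #(G.neighborFinset c ∩ C) := by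
  have hcycle := hG v
  simp only [SimpleGraph.IsAcyclic, not_forall, not_not] at hcycle
  obtain ⟨u, p, hp⟩ := hcycle
  let φ := SimpleGraph.Embedding.induce (G := G) (G.neighborSet v)
  have hC : ∀ c ∈ (p.map φ.toHom).support.toFinset,
      2 ≤ #(G.neighborFinset c ∩ (p.map φ.toHom).support.toFinset) := fun c hc ↦
    two_le_card_neighborFinset_inter_support (hp.map φ.injective) (List.mem_toFinset.1 hc)
  refine ⟨_, fun c hc ↦ ?_, lt_card_of_forall_le_card_neighborFinset_inter (by simp) hC, hC⟩
  rw [List.mem_toFinset, SimpleGraph.Walk.support_map, List.mem_map] at hc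
  obtain ⟨w, -, rfl⟩ := hc
  exact (G.mem_neighborFinset v _).2 w.2

lemma three_le_degree (hG : LocallyNonforesty G) (v : V) : 3 ≤ G.degree v := by
  classical
  obtain ⟨C, hCv, hcard, -⟩ := hG.exists_forall_two_le_card_neighborFinset_inter v
  exact Nat.succ_le_of_lt (hcard.trans_le (card_le_card hCv))

lemma isClique_neighborFinset (hG : LocallyNonforesty G) {v : V} (hv : G.degree v = 3) :
    G.IsClique (G.neighborFinset v) := by
  classical
  obtain ⟨C, hCv, hcard, hC⟩ := hG.exists_forall_two_le_card_neighborFinset_inter v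
  rw [← G.card_neighborFinset_eq_degree] at hv
  obtain rfl := eq_of_subset_of_card_le hCv (by lia)
  exact isClique_of_forall_card_le_card_neighborFinset_inter fun c hc ↦ by
    have := hC c hc
    lia

lemma neighborFinset_subset_insert [DecidableEq V] (hG : LocallyNonforesty G) {x v : V}
    (hv : G.degree v = 3) (hxv : G.Adj x v) :
    G.neighborFinset v ⊆ insert x (G.neighborFinset x) := fun w hw ↦ by
  rw [mem_insert, SimpleGraph.mem_neighborFinset, or_iff_not_imp_left]
  exact fun hwx ↦ hG.isClique_neighborFinset hv (by simpa using hxv.symm) hw (Ne.symm hwx)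

lemma two_le_card_heavyNbrs (hG : LocallyNonforesty G) (hconn : KConnected G 2) {x : V}
    (hx : G.degree x + 1 < Fintype.card V) : 2 ≤ #(heavyNbrs G x) := by
  classical
  by_contra! hlt
  refine hx.not_ge (hconn.card_le_degree_add_one hlt (heavyNbrs_subset_neighborFinset x)
    fun v hxv hv ↦ hG.neighborFinset_subset_insert ?_ hxv)
  have := hG.three_le_degree v
  have : ¬ 4 ≤ G.degree v := fun h ↦ hv (mem_heavyNbrs.2 ⟨hxv, h⟩)
  lia

lemma isPaired_or_isLone (hG : LocallyNonforesty G) (hconn : KConnected G 2)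
    (hcard : 4 < Fintype.card V) {v : V} (hv : G.degree v = 3) : IsPaired G v ∨ IsLone G v := by
  have h2 := hG.two_le_card_heavyNbrs hconn (x := v) (by lia)
  have h3 := card_le_card (heavyNbrs_subset_neighborFinset (G := G) v)
  rw [G.card_neighborFinset_eq_degree] at h3
  unfold IsPaired IsLone
  lia

lemma not_four_le_degree_iff (hG : LocallyNonforesty G) (hconn : KConnected G 2)
    (hcard : 4 < Fintype.card V) {v : V} : ¬ 4 ≤ G.degree v ↔ IsPaired G v ∨ IsLone G v := by
  refine ⟨fun h ↦ hG.isPaired_or_isLone hconn hcard ?_, ?_⟩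
  · have := hG.three_le_degree v
    lia
  · rintro (⟨h, -⟩ | ⟨h, -⟩) <;> lia

lemma card_filter_add_card_filter_eq (hG : LocallyNonforesty G) (hconn : KConnected G 2)
    (hcard : 4 < Fintype.card V) (s : Finset V) :
    #{v ∈ s | IsPaired G v} + #{v ∈ s | IsLone G v} + #{v ∈ s | 4 ≤ G.degree v} =
      #s := by
  classical
  rw [← card_union_of_disjoint (disjoint_filter.2 fun _ _ h ↦ h.not_isLone),
    ← filter_or, add_comm, ← s.card_filter_add_card_filter_not (4 ≤ G.degree ·)]
  simp only [hG.not_four_le_degree_iff hconn hcard]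

lemma card_pairedNbrs_add_card_loneNbrs_add_card_heavyNbrs (hG : LocallyNonforesty G)
    (hconn : KConnected G 2) (hcard : 4 < Fintype.card V) (x : V) :
    #(pairedNbrs G x) + #(loneNbrs G x) + #(heavyNbrs G x) = G.degree x :=
  hG.card_filter_add_card_filter_eq hconn hcard _

lemma card_heavyNbrs_pos (hG : LocallyNonforesty G) (hconn : KConnected G 2)
    (hcard : 4 < Fintype.card V) (x : V) : 0 < #(heavyNbrs G x) := by
  classical
  obtain ⟨v, hxv⟩ := (G.degree_pos_iff_exists_adj x).1 (by have := hG.three_le_degree x; lia)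
  by_cases hv : 4 ≤ G.degree v
  · exact card_pos.2 ⟨v, by simp [hxv, hv]⟩
  have hv3 : G.degree v = 3 := by have := hG.three_le_degree v; lia
  obtain ⟨w, hw, hwx⟩ := exists_mem_ne (hG.two_le_card_heavyNbrs hconn (x := v) (by lia)) x
  have hxw := hG.neighborFinset_subset_insert hv3 hxv (heavyNbrs_subset_neighborFinset v hw)
  refine card_pos.2 ⟨w, mem_heavyNbrs.2 ⟨?_, (mem_heavyNbrs.1 hw).2⟩⟩
  simpa [hwx] using hxw

lemma card_pairedNbrs_eq_one (hG : LocallyNonforesty G) (hconn : KConnected G 2)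
    (hcard : 4 < Fintype.card V) {v : V} (hv : IsPaired G v) : #(pairedNbrs G v) = 1 := by
  have hlone : loneNbrs G v = ∅ := eq_empty_of_forall_notMem fun u hu ↦ by
    obtain ⟨hvu, hu⟩ := mem_loneNbrs.1 hu
    have := hu.four_le_degree_of_adj hvu.symm
    have := hv.1
    lia
  have hsum := hG.card_pairedNbrs_add_card_loneNbrs_add_card_heavyNbrs hconn hcard v
  rw [hlone, card_empty, hv.1, hv.2] at hsum
  lia

lemma even_card_isPaired (hG : LocallyNonforesty G) (hconn : KConnected G 2)
    (hcard : 4 < Fintype.card V) : Even #{v | IsPaired G v} := by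
  classical
  refine even_card_of_forall_odd_card_neighborFinset_inter (G := G) fun v hv ↦ ?_
  rw [inter_filter, inter_univ, ← pairedNbrs,
    hG.card_pairedNbrs_eq_one hconn hcard (mem_filter.1 hv).2]
  exact odd_one

lemma even_card_pairedNbrs (hG : LocallyNonforesty G) (hconn : KConnected G 2)
    (hcard : 4 < Fintype.card V) {x : V} (hx : 4 ≤ G.degree x) : Even #(pairedNbrs G x) := by
  classical
  refine even_card_of_forall_odd_card_neighborFinset_inter (G := G) fun v hv ↦ ?_
  obtain ⟨hxv, hv⟩ := mem_pairedNbrs.1 hv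
  have hsub : pairedNbrs G v ⊆ G.neighborFinset x := fun u hu ↦ by
    obtain ⟨hvu, hu⟩ := mem_pairedNbrs.1 hu
    have hux : u ≠ x := by
      rintro rfl
      have := hu.1
      lia
    simpa [hux] using hG.neighborFinset_subset_insert hv.1 hxv ((G.mem_neighborFinset v u).2 hvu)
  have heq : G.neighborFinset v ∩ pairedNbrs G x = pairedNbrs G v := by
    ext u
    have := @hsub u
    simp only [mem_inter, SimpleGraph.mem_neighborFinset, mem_pairedNbrs] at this ⊢
    tauto
  rw [heq, hG.card_pairedNbrs_eq_one hconn hcard hv]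
  exact odd_one

lemma exists_ne_odd_degree_and_not_isPaired (hG : LocallyNonforesty G) (hconn : KConnected G 2)
    (hcard : 4 < Fintype.card V) {v : V} (hodd : Odd (G.degree v)) (hv : ¬ IsPaired G v) :
    ∃ w ≠ v, Odd (G.degree w) ∧ ¬ IsPaired G w := by
  have hpaired : ({w | Odd (G.degree w) ∧ IsPaired G w} : Finset V) =
      ({w | IsPaired G w} : Finset V) :=
    filter_congr fun w _ ↦ and_iff_right_of_imp fun hw ↦ hw.1 ▸ by decide
  have heven := G.even_card_odd_degree_vertices
  rw [← card_filter_add_card_filter_not (IsPaired G ·), filter_filter, filter_filter, hpaired,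
    Nat.even_add, iff_true_left (hG.even_card_isPaired hconn hcard)] at heven
  have hpos : 0 < #{w | Odd (G.degree w) ∧ ¬ IsPaired G w} :=
    card_pos.2 ⟨v, by simp [hodd, hv]⟩
  have hone : 1 < #{w | Odd (G.degree w) ∧ ¬ IsPaired G w} := by grind
  obtain ⟨w, hw, hwv⟩ := exists_mem_ne hone v
  exact ⟨w, hwv, (mem_filter.1 hw).2⟩

lemma card_nbrs_of_degree_eq_four (hG : LocallyNonforesty G) (hconn : KConnected G 2)
    (hcard : 5 < Fintype.card V) {x : V} (hx : G.degree x = 4) :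
    #(pairedNbrs G x) = 2 ∧ #(loneNbrs G x) = 0 ∨
      #(pairedNbrs G x) = 0 ∧ #(loneNbrs G x) ≤ 2 := by
  have hheavy := hG.two_le_card_heavyNbrs hconn (x := x) (by lia)
  have hsum := hG.card_pairedNbrs_add_card_loneNbrs_add_card_heavyNbrs hconn (by lia) x
  obtain ⟨k, hk⟩ := hG.even_card_pairedNbrs hconn (by lia) hx.ge
  lia

lemma fifteen_le_excess (hG : LocallyNonforesty G) (hconn : KConnected G 2)
    (hcard : 4 < Fintype.card V) {x : V} (hx : 6 ≤ G.degree x) : 15 ≤ excess G x := by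
  have hheavy := hG.card_heavyNbrs_pos hconn hcard x
  have hsum := hG.card_pairedNbrs_add_card_loneNbrs_add_card_heavyNbrs hconn hcard x
  unfold excess
  lia

lemma ten_le_excess (hG : LocallyNonforesty G) (hconn : KConnected G 2)
    (hcard : 6 < Fintype.card V) {x : V} (hx : 5 ≤ G.degree x) : 10 ≤ excess G x := by
  obtain hx5 | hx6 := hx.eq_or_lt
  · have hheavy := hG.two_le_card_heavyNbrs hconn (x := x) (by lia)
    have hsum := hG.card_pairedNbrs_add_card_loneNbrs_add_card_heavyNbrs hconn (by lia) x
    obtain ⟨k, hk⟩ := hG.even_card_pairedNbrs hconn (by lia) (x := x) (by lia)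
    unfold excess
    lia
  · have := hG.fifteen_le_excess hconn (by lia) hx6
    lia

lemma excess_nonneg (hG : LocallyNonforesty G) (hconn : KConnected G 2)
    (hcard : 6 < Fintype.card V) {x : V} (hx : 4 ≤ G.degree x) : 0 ≤ excess G x := by
  obtain hx4 | hx5 := hx.eq_or_lt
  · have := hG.card_nbrs_of_degree_eq_four hconn (by lia) hx4.symm
    unfold excess
    lia
  · have := hG.ten_le_excess hconn hcard hx5
    lia

lemma sum_excess_le_totalExcess (hG : LocallyNonforesty G) (hconn : KConnected G 2)
    (hcard : 6 < Fintype.card V) {s : Finset V} (hs : ∀ x ∈ s, 4 ≤ G.degree x) :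
    ∑ x ∈ s, excess G x ≤ totalExcess G :=
  sum_le_sum_of_subset_of_nonneg (fun x hx ↦ by simpa using hs x hx)
    fun _ hx _ ↦ hG.excess_nonneg hconn hcard (mem_filter.1 hx).2

lemma totalExcess_nonneg (hG : LocallyNonforesty G) (hconn : KConnected G 2)
    (hcard : 6 < Fintype.card V) : 0 ≤ totalExcess G := by
  simpa using hG.sum_excess_le_totalExcess hconn hcard (s := ∅) (by simp)

lemma totalExcess_eq (hG : LocallyNonforesty G) (hconn : KConnected G 2)
    (hcard : 4 < Fintype.card V) :
    totalExcess G = 6 * (4 * #G.edgeFinset - 7 * Fintype.card V) := by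
  have hpaired : ∑ x with 4 ≤ G.degree x, #(pairedNbrs G x) = #{v | IsPaired G v} * 2 :=
    (sum_card_filter_neighborFinset_comm G _ _).trans
      (sum_const_nat fun v hv ↦ (mem_filter.1 hv).2.2)
  have hlone : ∑ x with 4 ≤ G.degree x, #(loneNbrs G x) = #{v | IsLone G v} * 3 :=
    (sum_card_filter_neighborFinset_comm G _ _).trans
      (sum_const_nat fun v hv ↦ (mem_filter.1 hv).2.2)
  have hlight : ∑ x with ¬ 4 ≤ G.degree x, G.degree x = #{x | ¬ 4 ≤ G.degree x} * 3 :=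
    sum_const_nat fun v hv ↦ by
      have := hG.three_le_degree v
      have := (mem_filter.1 hv).2
      lia
  have hdegree := sum_filter_add_sum_filter_not univ (4 ≤ G.degree ·) (fun x ↦ G.degree x)
  have hcount := card_filter_add_card_filter_not (s := univ) (4 ≤ G.degree ·)
  have hkinds := hG.card_filter_add_card_filter_eq hconn hcard univ
  rw [G.sum_degrees_eq_twice_card_edges, hlight] at hdegree
  rw [card_univ] at hcount hkinds
  simp only [totalExcess, excess, sum_sub_distrib, ← mul_sum, sum_const, nsmul_eq_mul,
    ← Nat.cast_sum, hpaired, hlone]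
  lia

lemma neighborFinset_eq_insert_heavyNbrs [DecidableEq V] (hG : LocallyNonforesty G) {x v : V}
    (hv : IsLone G v) (hxv : G.Adj x v) (hx : #(heavyNbrs G x) = 2) :
    G.neighborFinset v = insert x (heavyNbrs G x) := by
  refine eq_of_subset_of_card_le (fun w hw ↦ ?_) ?_
  · have hw' := hG.neighborFinset_subset_insert hv.1 hxv hw
    have := hv.four_le_degree_of_adj ((G.mem_neighborFinset v w).1 hw)
    simp only [mem_insert, SimpleGraph.mem_neighborFinset, mem_heavyNbrs] at hw' ⊢
    tauto
  · rw [card_insert_of_notMem (by simp), hx, G.card_neighborFinset_eq_degree, hv.1]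

lemma insert_neighborFinset_subset_of_mem_heavyNbrs [DecidableEq V] (hG : LocallyNonforesty G)
    (hconn : KConnected G 2) (hcard : 4 < Fintype.card V) {x y v : V} (hv : IsLone G v)
    (hxv : G.Adj x v) (hpaired : pairedNbrs G x = ∅) (hx : #(heavyNbrs G x) = 2)
    (hy : y ∈ heavyNbrs G x) :
    insert x (G.neighborFinset x) ⊆ insert y (G.neighborFinset y) := by
  have hlone {u : V} (hu : IsLone G u) (hxu : G.Adj x u) {w : V} (hw : w ∈ heavyNbrs G x) :
      w ∈ G.neighborFinset u := by
    rw [hG.neighborFinset_eq_insert_heavyNbrs hu hxu hx]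
    exact mem_insert_of_mem hw
  intro w hw
  rw [mem_insert, SimpleGraph.mem_neighborFinset] at hw ⊢
  rw [or_iff_not_imp_left]
  intro hwy
  rcases hw with rfl | hxw
  · exact (mem_heavyNbrs.1 hy).1.symm
  by_cases hwheavy : 4 ≤ G.degree w
  · exact hG.isClique_neighborFinset hv.1 (hlone hv hxv hy)
      (hlone hv hxv (mem_heavyNbrs.2 ⟨hxw, hwheavy⟩)) (Ne.symm hwy)
  rcases (hG.not_four_le_degree_iff hconn hcard).1 hwheavy with hw | hw
  · simpa [hpaired] using mem_pairedNbrs.2 ⟨hxw, hw⟩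
  · exact ((G.mem_neighborFinset w y).1 (hlone hw hxw hy)).symm

-- If `y` had degree four, then `x` and `y` would have the same closed neighbourhood, which only
-- the second heavy neighbour of `x` could leave.
lemma five_le_degree_of_mem_heavyNbrs (hG : LocallyNonforesty G) (hconn : KConnected G 2)
    (hcard : 5 < Fintype.card V) {x y v : V} (hv : IsLone G v)
    (hxv : G.Adj x v) (hpaired : pairedNbrs G x = ∅) (hx : #(heavyNbrs G x) = 2)
    (hx4 : G.degree x = 4) (hy : y ∈ heavyNbrs G x) : 5 ≤ G.degree y := by
  classical
  have hy4 := (mem_heavyNbrs.1 hy).2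
  by_contra! hlt
  have hclosed : insert x (G.neighborFinset x) = insert y (G.neighborFinset y) := by
    refine eq_of_subset_of_card_le
      (hG.insert_neighborFinset_subset_of_mem_heavyNbrs hconn (by lia) hv hxv hpaired hx hy) ?_
    rw [card_insert_of_notMem (by simp), card_insert_of_notMem (by simp),
      G.card_neighborFinset_eq_degree, G.card_neighborFinset_eq_degree]
    lia
  have hle := hconn.card_le_degree_add_one (x := x) (S := (heavyNbrs G x).erase y)
    (by rw [card_erase_of_mem hy, hx]; decide)
    ((erase_subset _ _).trans (heavyNbrs_subset_neighborFinset x)) fun w hxw hw ↦ ?_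
  · lia
  · obtain rfl | hwy := eq_or_ne w y
    · exact hclosed ▸ subset_insert _ _
    · refine hG.neighborFinset_subset_insert ?_ hxw
      have := hG.three_le_degree w
      have : ¬ 4 ≤ G.degree w := fun h ↦ hw (by simp [hwy, hxw, h])
      lia

section SmallTotalExcess

variable (hG : LocallyNonforesty G) (hconn : KConnected G 2) (hcard : 6 < Fintype.card V)
  (htotal : totalExcess G ≤ 12)

include hG hconn hcard htotal

lemma card_loneNbrs_eq_one {v x : V} (hv : IsLone G v) (hxv : G.Adj x v) (hx : G.degree x = 4) :
    #(loneNbrs G x) = 1 := by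
  classical
  have hpos : 0 < #(loneNbrs G x) := card_pos.2 ⟨v, mem_loneNbrs.2 ⟨hxv, hv⟩⟩
  have hsum := hG.card_pairedNbrs_add_card_loneNbrs_add_card_heavyNbrs hconn (by lia) x
  by_contra hne
  obtain ⟨hpaired, htwo⟩ : #(pairedNbrs G x) = 0 ∧ #(loneNbrs G x) = 2 := by
    have := hG.card_nbrs_of_degree_eq_four hconn (by lia) hx
    lia
  have hheavy : #(heavyNbrs G x) = 2 := by lia
  obtain ⟨y, hy⟩ := card_pos.1 (hheavy.symm ▸ two_pos)
  have hxy := (mem_heavyNbrs.1 hy).1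
  rw [card_eq_zero] at hpaired
  have hy5 := hG.five_le_degree_of_mem_heavyNbrs hconn (by lia) hv hxv hpaired hheavy hx hy
  have hlone : loneNbrs G x ⊆ loneNbrs G y := fun w hw ↦ by
    obtain ⟨hxw, hw⟩ := mem_loneNbrs.1 hw
    have hwy : w ≠ y := by
      rintro rfl
      have := hw.1
      lia
    have hyw := hG.insert_neighborFinset_subset_of_mem_heavyNbrs hconn (by lia) hv hxv hpaired
      hheavy hy (mem_insert_of_mem ((G.mem_neighborFinset x w).2 hxw))
    exact mem_loneNbrs.2 ⟨by simpa [hwy] using hyw, hw⟩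
  have hexcess_x : excess G x = 2 := by simp [excess, hx, hpaired, htwo]
  have hexcess_y : 11 ≤ excess G y := by
    obtain hy5 | hy6 := hy5.eq_or_lt
    · have := hG.two_le_card_heavyNbrs hconn (x := y) (by lia)
      have := hG.card_pairedNbrs_add_card_loneNbrs_add_card_heavyNbrs hconn (by lia) y
      have := card_le_card hlone
      unfold excess
      lia
    · have := hG.fifteen_le_excess hconn (by lia) hy6
      lia
  have hle := hG.sum_excess_le_totalExcess hconn hcard (s := {x, y}) (by grind)
  rw [sum_pair hxy.ne] at hle
  lia

lemma four_le_excess_of_adj_isLone {v x : V} (hv : IsLone G v) (hxv : G.Adj x v) :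
    4 ≤ excess G x := by
  obtain hx4 | hx5 := (hv.four_le_degree_of_adj hxv.symm).eq_or_lt
  · have hlone := hG.card_loneNbrs_eq_one hconn hcard htotal hv hxv hx4.symm
    have := hG.card_nbrs_of_degree_eq_four hconn (by lia) hx4.symm
    unfold excess
    lia
  · have := hG.ten_le_excess hconn hcard hx5
    lia

lemma four_mul_card_erase_add_excess_le [DecidableEq V] {v x : V} (hv : IsLone G v)
    (hx : 4 ≤ G.degree x) : 4 * #((G.neighborFinset v).erase x) + excess G x ≤ 12 := by
  have hfour : ∀ y ∈ (G.neighborFinset v).erase x, 4 ≤ excess G y := fun y hy ↦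
    hG.four_le_excess_of_adj_isLone hconn hcard htotal hv
      ((G.mem_neighborFinset v y).1 (mem_of_mem_erase hy)).symm
  have hsum := card_nsmul_le_sum _ _ _ hfour
  have hle := hG.sum_excess_le_totalExcess hconn hcard
    (s := insert x ((G.neighborFinset v).erase x)) fun y hy ↦ by
      rcases mem_insert.1 hy with rfl | hy
      · exact hx
      · exact hv.four_le_degree_of_adj ((G.mem_neighborFinset v y).1 (mem_of_mem_erase hy))
  rw [sum_insert (notMem_erase _ _)] at hle
  rw [nsmul_eq_mul] at hsum
  linarith

lemma degree_le_four_of_isLone {v : V} (hv : IsLone G v) (x : V) : G.degree x ≤ 4 := by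
  classical
  by_contra! hx
  have hle := hG.four_mul_card_erase_add_excess_le hconn hcard htotal hv (x := x) (by lia)
  have hten := hG.ten_le_excess hconn hcard hx
  have htwo := pred_card_le_card_erase (a := x) (s := G.neighborFinset v)
  rw [G.card_neighborFinset_eq_degree, hv.1] at htwo
  lia

lemma eq_of_isLone {v w : V} (hv : IsLone G v) (hw : IsLone G w) : w = v := by
  classical
  obtain ⟨x, hwx⟩ := (G.degree_pos_iff_exists_adj w).1 (hw.1.symm ▸ three_pos)
  have hx : G.degree x = 4 :=
    (hG.degree_le_four_of_isLone hconn hcard htotal hw x).antisymm (hw.four_le_degree_of_adj hwx)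
  have hone := hG.card_loneNbrs_eq_one hconn hcard htotal hw hwx.symm hx
  have hexcess := hG.four_le_excess_of_adj_isLone hconn hcard htotal hw hwx.symm
  have hle := hG.four_mul_card_erase_add_excess_le hconn hcard htotal hv hx.ge
  by_cases hvx : x ∈ G.neighborFinset v
  · have hxv := ((G.mem_neighborFinset v x).1 hvx).symm
    exact card_le_one.1 hone.le w (by simp [hwx.symm, hw]) v (by simp [hxv, hv])
  · rw [erase_eq_of_notMem hvx, G.card_neighborFinset_eq_degree, hv.1] at hle
    lia

lemma not_isLone (v : V) : ¬ IsLone G v := by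
  intro hv
  obtain ⟨w, hwv, hodd, hw⟩ := hG.exists_ne_odd_degree_and_not_isPaired hconn (by lia) (v := v)
    (hv.1 ▸ by decide) fun h ↦ h.not_isLone hv
  have hle := hG.degree_le_four_of_isLone hconn hcard htotal hv w
  have hw3 : G.degree w = 3 := by
    have := hG.three_le_degree w
    grind
  have hw := (hG.isPaired_or_isLone hconn (by lia) hw3).resolve_left hw
  exact hwv (hG.eq_of_isLone hconn hcard htotal hv hw)

lemma card_loneNbrs_eq_zero (x : V) : #(loneNbrs G x) = 0 :=
  card_eq_zero.2 <| filter_eq_empty_iff.2 fun v _ ↦ hG.not_isLone hconn hcard htotal v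

lemma degree_le_four (x : V) : G.degree x ≤ 4 := by
  classical
  by_contra! hx
  have hx5 : G.degree x = 5 := by
    by_contra hne
    have := hG.fifteen_le_excess hconn (by lia) (x := x) (by lia)
    have := hG.sum_excess_le_totalExcess hconn hcard (s := {x}) (by simpa using hx.le)
    rw [sum_singleton] at this
    lia
  obtain ⟨w, hwx, hodd, hw⟩ := hG.exists_ne_odd_degree_and_not_isPaired hconn (by lia) (v := x)
    (hx5 ▸ by decide) fun h ↦ by have := h.1; lia
  have hw3 : G.degree w ≠ 3 := fun h ↦
    (hG.isPaired_or_isLone hconn (by lia) h).elim hw (hG.not_isLone hconn hcard htotal w)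
  have hw5 : 5 ≤ G.degree w := by
    have := hG.three_le_degree w
    grind
  have hle := hG.sum_excess_le_totalExcess hconn hcard (s := {w, x}) (by grind)
  rw [sum_pair hwx] at hle
  have := hG.ten_le_excess hconn hcard hw5
  have := hG.ten_le_excess hconn hcard hx
  lia

lemma excess_eq_six {x : V} (hx : 4 ≤ G.degree x) (hpaired : #(pairedNbrs G x) = 0) :
    excess G x = 6 := by
  have hx4 := (hG.degree_le_four hconn hcard htotal x).antisymm hx
  simp [excess, hx4, hpaired, hG.card_loneNbrs_eq_zero hconn hcard htotal x]

lemma excess_eq_zero_and_card_heavyNbrs_eq_two {x : V} (hx : 4 ≤ G.degree x)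
    (hpaired : #(pairedNbrs G x) ≠ 0) : excess G x = 0 ∧ #(heavyNbrs G x) = 2 := by
  have hx4 := (hG.degree_le_four hconn hcard htotal x).antisymm hx
  have hsum := hG.card_pairedNbrs_add_card_loneNbrs_add_card_heavyNbrs hconn (by lia) x
  have := hG.card_nbrs_of_degree_eq_four hconn (by lia) hx4
  unfold excess
  lia

lemma totalExcess_nonpos : totalExcess G ≤ 0 := by
  classical
  refine sum_nonpos fun x hx ↦ ?_
  rw [mem_filter_univ] at hx
  by_contra! hpos
  have hpaired : pairedNbrs G x = ∅ := by
    by_contra hne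
    exact hpos.ne' (hG.excess_eq_zero_and_card_heavyNbrs_eq_two hconn hcard htotal hx
      (card_ne_zero.2 (nonempty_iff_ne_empty.2 hne))).1
  obtain ⟨C, hCx, hcardC, hC⟩ := hG.exists_forall_two_le_card_neighborFinset_inter x
  have hheavy : ∀ c ∈ C, 4 ≤ G.degree c := fun c hc ↦ by
    by_contra hlt
    rcases (hG.not_four_le_degree_iff hconn (by lia)).1 hlt with hc' | hc'
    · simpa [hpaired] using mem_pairedNbrs.2 ⟨(G.mem_neighborFinset x c).1 (hCx hc), hc'⟩
    · exact hG.not_isLone hconn hcard htotal c hc'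
  have hsix : ∀ c ∈ C, excess G c = 6 := fun c hc ↦ by
    refine hG.excess_eq_six hconn hcard htotal (hheavy c hc) ?_
    by_contra hne
    have htwo :=
      (hG.excess_eq_zero_and_card_heavyNbrs_eq_two hconn hcard htotal (hheavy c hc) hne).2
    have hsub : insert x (G.neighborFinset c ∩ C) ⊆ heavyNbrs G c := fun w hw ↦ by
      have hcx := (G.mem_neighborFinset x c).1 (hCx hc)
      grind [mem_heavyNbrs, SimpleGraph.mem_neighborFinset, SimpleGraph.adj_comm]
    have hxC : x ∉ G.neighborFinset c ∩ C := fun h ↦ by simpa using hCx (mem_inter.1 h).2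
    have hle := card_le_card hsub
    rw [card_insert_of_notMem hxC, htwo] at hle
    have := hC c hc
    lia
  have hle := hG.sum_excess_le_totalExcess hconn hcard hheavy
  rw [sum_congr rfl hsix, sum_const, nsmul_eq_mul] at hle
  lia

end SmallTotalExcess

lemma four_mul_card_edgeFinset_eq_or_le (hG : LocallyNonforesty G) (hconn : KConnected G 2)
    (hcard : 6 < Fintype.card V) :
    4 * #G.edgeFinset = 7 * Fintype.card V ∨ 7 * Fintype.card V + 3 ≤ 4 * #G.edgeFinset := by
  have heq := hG.totalExcess_eq hconn (by lia)
  have hnonneg := hG.totalExcess_nonneg hconn hcard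
  have hnonpos := hG.totalExcess_nonpos hconn hcard
  lia

end LocallyNonforesty

end Discharging

theorem stmt_5_general {V : Type*} [Fintype V] (G : SimpleGraph V) (n : ℕ)
    (hn : Fintype.card V = n) (h7 : 7 ≤ n)
    (hconn : KConnected G 2) (hloc : LocallyNonforesty G) :
    (if n % 4 = 0 ∨ n % 4 = 3 then 2 * n - n / 4 else 2 * n + 1 - n / 4)
      ≤ G.edgeSet.ncard := by
  classical
  rw [← G.coe_edgeFinset, Set.ncard_coe_finset]
  have hsize := hloc.four_mul_card_edgeFinset_eq_or_le hconn (by lia)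
  split_ifs <;> lia

theorem stmt_5 {V : Type*} [Fintype V] (G : SimpleGraph V) (n : ℕ)
    (hn : Fintype.card V = n) (h8 : 8 ≤ n)
    (hconn : KConnected G 2) (hloc : LocallyNonforesty G) :
    (if n % 4 = 0 ∨ n % 4 = 3 then 2 * n - n / 4 else 2 * n + 1 - n / 4)
      ≤ G.edgeSet.ncard :=
  stmt_5_general G n hn (by lia) hconn hloc
end

section
/- For every integer n ≥ 8 there exists a 2-connected locally nonforesty graph of order n whose size equals g(n), where g(n) = 2n − ⌊n/4⌋ if n ≡ 0 or 3 (mod 4), and g(n) = 2n + 1 − ⌊n/4⌋ otherwise. Consequently, the minimum size of a 2-connected locally nonforesty graph of order n is exactly g(n). -/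
/-!
Every vertex is the hub of a generalized wheel. Gluing a generalized wheel onto a vertex set which
it meets never decreases the number of edges minus twice the number of vertices, and this quantity
is `-2` for a single vertex. So a class of vertices obtained by gluing overlapping wheels induces at
least `2s - 2` edges on `s` vertices. If there is equality then the class is a single wheel on four
vertices or has a cut vertex, and by 2-connectedness the latter cannot be the whole graph. At least
two edges leave every proper class, and summing degrees class by class gives `4m ≥ 7n`, with a
margin unless every class has order divisible by four.

The bound is attained by a Hamiltonian cycle in which quadruples of consecutive vertices have been
completed to cliques.
-/

open Finset SimpleGraph

section Interedges

variable {V : Type*} (G : SimpleGraph V) [DecidableRel G.Adj]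

theorem card_interedges_eq_sum (S T : Finset V) :
    #(G.interedges S T) = ∑ x ∈ S, #{y ∈ T | G.Adj x y} := by
  simp_rw [interedges_def, card_filter, sum_product]

theorem card_interedges_comm (S T : Finset V) :
    #(G.interedges S T) = #(G.interedges T S) :=
  haveI := G.symm
  Rel.card_interedges_comm S T

theorem card_interedges_self_le (S : Finset V) :
    #(G.interedges S S) ≤ #S * (#S - 1) := by
  classical
  rw [card_interedges_eq_sum, ← smul_eq_mul]
  refine sum_le_card_nsmul _ _ _ fun x hx => ?_
  rw [← card_erase_of_mem hx]
  exact card_le_card fun y hy => by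
    rw [mem_filter] at hy
    exact mem_erase.2 ⟨hy.2.ne', hy.1⟩

/-- The excess of a vertex set `S` over the bound `2 * #S` on the number of edges of the subgraph
induced by `S`. Edges are counted as ordered pairs, so that the excess is doubled. -/
def edgeExcess (S : Finset V) : ℤ :=
  #(G.interedges S S) - 4 * #S

theorem edgeExcess_singleton (x : V) : edgeExcess G {x} = -4 := by
  simp [edgeExcess, card_interedges_eq_sum, filter_singleton]

variable [DecidableEq V] {S T : Finset V}

theorem card_interedges_union_left (hST : Disjoint S T) (U : Finset V) :
    #(G.interedges (S ∪ T) U) = #(G.interedges S U) + #(G.interedges T U) := by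
  simp_rw [card_interedges_eq_sum, sum_union hST]

theorem card_interedges_union_right (hST : Disjoint S T) (U : Finset V) :
    #(G.interedges U (S ∪ T)) = #(G.interedges U S) + #(G.interedges U T) := by
  simp_rw [card_interedges_comm G U, card_interedges_union_left G hST]

theorem edgeExcess_union (hST : Disjoint S T) :
    edgeExcess G (S ∪ T) = edgeExcess G S + edgeExcess G T + 2 * #(G.interedges S T) := by
  have hpairs : #(G.interedges (S ∪ T) (S ∪ T)) =
      #(G.interedges S S) + #(G.interedges T T) + 2 * #(G.interedges S T) := by
    rw [card_interedges_union_left G hST, card_interedges_union_right G hST,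
      card_interedges_union_right G hST, card_interedges_comm G T S]
    ring
  simp only [edgeExcess, hpairs, card_union_of_disjoint hST]
  push_cast
  ring

theorem edgeExcess_union_sub (hST : Disjoint S T) :
    edgeExcess G (S ∪ T) - edgeExcess G S =
      #(G.interedges T (S ∪ T)) + #(G.interedges S T) - 4 * #T := by
  rw [edgeExcess_union G hST, card_interedges_union_right G hST, card_interedges_comm G T S]
  simp only [edgeExcess]
  push_cast
  ring

theorem edgeExcess_union_add_inter (S T : Finset V) :
    edgeExcess G (S ∪ T) + edgeExcess G (S ∩ T) =
      edgeExcess G S + edgeExcess G T + 2 * #(G.interedges (S \ T) (T \ S)) := by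
  have hunion := edgeExcess_union G (disjoint_sdiff : Disjoint S (T \ S))
  have hT := edgeExcess_union G (disjoint_sdiff_inter T S)
  have hcross := card_interedges_union_left G (disjoint_sdiff_inter S T) (T \ S)
  rw [union_sdiff_self_eq_union] at hunion
  rw [sdiff_union_inter, inter_comm, card_interedges_comm] at hT
  rw [sdiff_union_inter] at hcross
  lia

end Interedges

theorem exists_adj_of_preconnected_induce {V : Type*} {G : SimpleGraph V} {U : Set V}
    (hU : (G.induce U).Preconnected) {S : Set V} {x y : V} (hx : x ∈ U) (hy : y ∈ U)
    (hxS : x ∈ S) (hyS : y ∉ S) : ∃ a ∈ U, ∃ b ∈ U, a ∈ S ∧ b ∉ S ∧ G.Adj a b := by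
  obtain ⟨p⟩ := hU ⟨x, hx⟩ ⟨y, hy⟩
  obtain ⟨d, -, hfst, hsnd⟩ := p.exists_boundary_dart (Subtype.val ⁻¹' S) hxS hyS
  exact ⟨d.fst, d.fst.2, d.snd, d.snd.2, hfst, hsnd, d.adj⟩

section Wheel

variable {V : Type*} [DecidableEq V] {G : SimpleGraph V} [DecidableRel G.Adj]

variable (G) in
/-- A generalized wheel with hub `c` and vertex set `W`: the hub is adjacent to all other vertices,
the rim `W.erase c` is connected, and all degrees inside `W` are at least three. A vertex together
with a cycle in its neighborhood is of this kind. -/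
structure IsWheel (c : V) (W : Finset V) : Prop where
  hub_mem : c ∈ W
  adj_hub : ∀ x ∈ W, x ≠ c → G.Adj c x
  three_le_card_adj : ∀ x ∈ W, 3 ≤ #{y ∈ W | G.Adj x y}
  preconnected_rim : (G.induce (W.erase c : Set V)).Preconnected

theorem isWheel_of_isCycle {c u : V} {p : G.Walk u u} (hp : p.IsCycle)
    (hc : ∀ x ∈ p.support, G.Adj c x) : IsWheel G c (insert c p.support.toFinset) := by
  set R := p.support.toFinset
  replace hc : ∀ x ∈ R, G.Adj c x := fun x hx => hc x (List.mem_toFinset.1 hx)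
  have hcR : c ∉ R := fun h => (hc c h).ne rfl
  have two_le (x : V) (hx : x ∈ R) : 2 ≤ #{y ∈ R | G.Adj x y} := by
    rw [← hp.ncard_neighborSet_toSubgraph_eq_two (List.mem_toFinset.1 hx), ← Set.ncard_coe_finset]
    refine Set.ncard_le_ncard (fun y hy => ?_) (Set.toFinite _)
    have hyp : y ∈ p.support := p.mem_verts_toSubgraph.1 (p.toSubgraph.edge_vert hy.symm)
    exact mem_filter.2 ⟨List.mem_toFinset.2 hyp, hy.adj_sub⟩
  have hubR : {y ∈ R | G.Adj c y} = R := filter_true_of_mem hc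
  have three_le_card : 3 ≤ #R := by
    have huR : u ∈ R := List.mem_toFinset.2 p.start_mem_support
    exact (two_le u huR).trans_lt
      (card_lt_card (filter_ssubset.2 ⟨u, huR, G.loopless.irrefl u⟩))
  refine ⟨mem_insert_self _ _, fun x hx hxc => hc x (mem_of_mem_insert_of_ne hx hxc),
    fun x hx => ?_, ?_⟩
  · rw [filter_insert]
    rcases mem_insert.1 hx with rfl | hx
    · rwa [if_neg (G.loopless.irrefl x), hubR]
    · rw [if_pos (hc x hx).symm, card_insert_of_notMem fun h => hcR (mem_of_mem_filter c h)]
      exact Nat.succ_le_succ (two_le x hx)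
  · rw [erase_insert hcR, List.coe_toFinset]
    exact p.connected_induce_support.preconnected

theorem LocallyNonforesty.exists_isWheel (hG : LocallyNonforesty G) (c : V) :
    ∃ W, IsWheel G c W := by
  have hc := hG c
  simp only [IsAcyclic, not_forall, not_not] at hc
  obtain ⟨u, p, hp⟩ := hc
  refine ⟨_, isWheel_of_isCycle (hp.map (f := (Embedding.induce _).toHom) Subtype.val_injective)
    fun x hx => ?_⟩
  rw [Walk.support_map, List.mem_map] at hx
  obtain ⟨y, -, rfl⟩ := hx
  exact y.2

namespace IsWheel

variable {c : V} {W A B : Finset V}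

theorem card_adj_hub_add_one (hW : IsWheel G c W) : #{y ∈ W | G.Adj c y} + 1 = #W := by
  rw [← card_erase_add_one hW.hub_mem]
  congr 2
  ext y
  rw [mem_filter, mem_erase, and_comm]
  exact and_congr_left fun hy => ⟨fun h => h.ne', hW.adj_hub y hy⟩

theorem four_le_card (hW : IsWheel G c W) : 4 ≤ #W := by
  have := hW.three_le_card_adj c hW.hub_mem
  have := hW.card_adj_hub_add_one
  omega

theorem three_mul_card_le (hW : IsWheel G c W) (hS : A ⊆ W) :
    3 * #A ≤ #(G.interedges A W) := by
  rw [card_interedges_eq_sum, mul_comm, ← smul_eq_mul]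
  exact card_nsmul_le_sum _ _ _ fun x hx => hW.three_le_card_adj x (hS hx)

theorem card_interedges_hub (hW : IsWheel G c W) (hA : A ⊆ W) (hcA : c ∉ A) :
    #(G.interedges {c} A) = #A := by
  rw [card_interedges_eq_sum, sum_singleton]
  exact congrArg card (filter_true_of_mem fun x hx =>
    hW.adj_hub x (hA hx) (ne_of_mem_of_not_mem hx hcA))

theorem card_le_card_interedges (hW : IsWheel G c W) (hcA : c ∈ A) (hB : B ⊆ W)
    (hAB : Disjoint A B) : #B ≤ #(G.interedges A B) := by
  rw [← hW.card_interedges_hub hB (disjoint_left.1 hAB hcA)]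
  exact card_le_card (G.interedges_mono (singleton_subset_iff.2 hcA) Subset.rfl)

theorem interedges_erase_hub_nonempty (hW : IsWheel G c (A ∪ B)) (hAB : Disjoint A B)
    (hcA : c ∈ A) (hA : 1 < #A) (hB : B.Nonempty) : (G.interedges (A.erase c) B).Nonempty := by
  obtain ⟨x, hx⟩ : (A.erase c).Nonempty := by
    rwa [erase_nonempty hcA, ← one_lt_card_iff_nontrivial]
  obtain ⟨y, hy⟩ := hB
  have hyA : y ∉ A := disjoint_right.1 hAB hy
  have hyc : y ≠ c := by rintro rfl; exact hyA hcA
  have hxW : x ∈ (A ∪ B).erase c :=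
    mem_erase.2 ⟨ne_of_mem_erase hx, mem_union_left B (mem_of_mem_erase hx)⟩
  have hyW : y ∈ (A ∪ B).erase c := mem_erase.2 ⟨hyc, mem_union_right A hy⟩
  obtain ⟨a, ha, b, hb, haA, hbA, hab⟩ := exists_adj_of_preconnected_induce hW.preconnected_rim
    (S := A) hxW hyW (mem_of_mem_erase hx) hyA
  have hbB : b ∈ B := (mem_union.1 (mem_of_mem_erase hb)).resolve_left hbA
  exact ⟨(a, b), G.mk_mem_interedges_iff.2 ⟨mem_erase.2 ⟨ne_of_mem_erase ha, haA⟩, hbB, hab⟩⟩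

theorem card_lt_card_interedges (hW : IsWheel G c (A ∪ B)) (hAB : Disjoint A B)
    (hcA : c ∈ A) (hA : 1 < #A) (hB : B.Nonempty) : #B < #(G.interedges A B) := by
  have hspokes := hW.card_interedges_hub subset_union_right (disjoint_left.1 hAB hcA)
  have hrim := (hW.interedges_erase_hub_nonempty hAB hcA hA hB).card_pos
  have hsplit := card_interedges_union_left G
    (disjoint_singleton_left.2 (notMem_erase c A)) B
  rw [← insert_eq, insert_erase hcA] at hsplit
  omega

theorem card_add_four_mul_card_le (hW : IsWheel G c (A ∪ B)) (hAB : Disjoint A B) (hcB : c ∈ B) :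
    #A + 4 * #B ≤ #(G.interedges B (A ∪ B)) + 4 := by
  have hrim := hW.three_mul_card_le ((erase_subset c B).trans subset_union_right)
  have hhub := hW.card_adj_hub_add_one
  have hsplit := card_interedges_union_left G
    (disjoint_singleton_left.2 (notMem_erase c B)) (A ∪ B)
  rw [← insert_eq, insert_erase hcB, card_interedges_eq_sum G {c}, sum_singleton] at hsplit
  rw [card_union_of_disjoint hAB] at hhub
  have := card_erase_add_one hcB
  omega

theorem min_le_card_add_card_interedges (hW : IsWheel G c (A ∪ B)) (hAB : Disjoint A B)
    (hcB : c ∈ B) (hA : A.Nonempty) : min 5 (#A + 3) ≤ #A + #(G.interedges A B) := by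
  have hspokes := hW.card_le_card_interedges hcB subset_union_left hAB.symm
  rw [card_interedges_comm] at hspokes
  have hdeg := hW.three_mul_card_le (A := A) subset_union_left
  rw [card_interedges_union_right G hAB] at hdeg
  have hinner := card_interedges_self_le G A
  have hpos := hA.card_pos
  by_cases h3 : 3 ≤ #A
  · omega
  · interval_cases #A <;> omega

theorem edgeExcess_le_of_subset (hW : IsWheel G c W) (hAW : A ⊆ W) (hA : A.Nonempty) :
    edgeExcess G A ≤ edgeExcess G W := by
  obtain ⟨B, hAB, rfl⟩ : ∃ B, Disjoint A B ∧ W = A ∪ B :=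
    ⟨W \ A, disjoint_sdiff, (union_sdiff_of_subset hAW).symm⟩
  have hdiff := edgeExcess_union_sub G hAB
  rcases mem_union.1 hW.hub_mem with hcA | hcB
  · have hdeg := hW.three_mul_card_le (A := B) subset_union_right
    have hspokes := hW.card_le_card_interedges hcA subset_union_right hAB
    lia
  · have hdeg := hW.card_add_four_mul_card_le hAB hcB
    have hcross := hW.min_le_card_add_card_interedges hAB hcB hA
    have := hA.card_pos
    lia

theorem edgeExcess_lt_of_ssubset (hW : IsWheel G c W) (hAW : A ⊂ W) (hA : 1 < #A) :
    edgeExcess G A < edgeExcess G W := by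
  obtain ⟨B, hAB, rfl⟩ : ∃ B, Disjoint A B ∧ W = A ∪ B :=
    ⟨W \ A, disjoint_sdiff, (union_sdiff_of_subset hAW.1).symm⟩
  have hB : B.Nonempty := by
    rw [nonempty_iff_ne_empty]
    rintro rfl
    exact hAW.ne (union_empty A).symm
  have hdiff := edgeExcess_union_sub G hAB
  rcases mem_union.1 hW.hub_mem with hcA | hcB
  · have hdeg := hW.three_mul_card_le (A := B) subset_union_right
    have hcross := hW.card_lt_card_interedges hAB hcA hA hB
    lia
  · have hdeg := hW.card_add_four_mul_card_le hAB hcB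
    have hcross := hW.min_le_card_add_card_interedges hAB hcB (card_pos.1 (by omega))
    lia

theorem neg_four_le_edgeExcess (hW : IsWheel G c W) : -4 ≤ edgeExcess G W := by
  simpa [edgeExcess_singleton] using
    hW.edgeExcess_le_of_subset (singleton_subset_iff.2 hW.hub_mem) (singleton_nonempty c)

theorem edgeExcess_le_union (hW : IsWheel G c W) (hAW : (A ∩ W).Nonempty) :
    edgeExcess G A ≤ edgeExcess G (A ∪ W) := by
  have hinter := hW.edgeExcess_le_of_subset inter_subset_right hAW
  have := edgeExcess_union_add_inter G A W
  lia

end IsWheel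
end Wheel

namespace IsWheel

variable {V : Type*} [DecidableEq V] {G : SimpleGraph V} [DecidableRel G.Adj] {c : V}
  {A W : Finset V}

theorem card_inter_eq_one (hW : IsWheel G c W) (hAW : (A ∩ W).Nonempty) (hWA : ¬ W ⊆ A)
    (hle : edgeExcess G (A ∪ W) ≤ edgeExcess G A) : #(A ∩ W) = 1 := by
  by_contra hcard
  have hlt := hW.edgeExcess_lt_of_ssubset (ssubset_of_subset_of_ne inter_subset_right
    (mt inter_eq_right.1 hWA)) (by have := hAW.card_pos; omega)
  have := edgeExcess_union_add_inter G A W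
  lia

theorem interedges_sdiff_eq_empty (hW : IsWheel G c W) (hAW : (A ∩ W).Nonempty)
    (hle : edgeExcess G (A ∪ W) ≤ edgeExcess G A) : G.interedges (A \ W) (W \ A) = ∅ := by
  have hinter := hW.edgeExcess_le_of_subset inter_subset_right hAW
  have := edgeExcess_union_add_inter G A W
  rw [← card_eq_zero]
  lia

end IsWheel

section WheelComponent

variable {V : Type*} [DecidableEq V] {G : SimpleGraph V} [DecidableRel G.Adj]

variable (G) in
/-- A vertex set is wheel-closed if it contains every generalized wheel that it meets. -/
def IsWheelClosed (S : Finset V) : Prop :=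
  ∀ c W, IsWheel G c W → (S ∩ W).Nonempty → W ⊆ S

variable (G) in
/-- The wheel components, minimal nonempty wheel-closed sets, are the classes into which overlapping
generalized wheels glue together. -/
def IsWheelComponent (P : Finset V) : Prop :=
  Minimal (fun S : Finset V => S.Nonempty ∧ IsWheelClosed G S) P

theorem IsWheelClosed.sdiff {S P : Finset V} (hS : IsWheelClosed G S) (hP : IsWheelClosed G P) :
    IsWheelClosed G (S \ P) := by
  intro c W hW hSPW
  have hWS : W ⊆ S := hS c W hW (hSPW.mono (inter_subset_inter_right sdiff_subset))
  refine subset_sdiff.2 ⟨hWS, disjoint_right.2 fun p hpP hpW => ?_⟩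
  obtain ⟨x, hx⟩ := hSPW
  have hWP : W ⊆ P := hP c W hW ⟨p, mem_inter.2 ⟨hpP, hpW⟩⟩
  exact (mem_sdiff.1 (mem_of_mem_inter_left hx)).2 (hWP (mem_of_mem_inter_right hx))

namespace IsWheelComponent

variable {P A : Finset V}

theorem exists_isWheel_not_subset (hP : IsWheelComponent G P) (hAP : A ⊂ P) (hA : A.Nonempty) :
    ∃ c W, IsWheel G c W ∧ (A ∩ W).Nonempty ∧ ¬ W ⊆ A ∧ W ⊆ P := by
  have hnot : ¬ IsWheelClosed G A := fun hclosed => hAP.2 (hP.2 ⟨hA, hclosed⟩ hAP.1)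
  simp only [IsWheelClosed, not_forall] at hnot
  obtain ⟨c, W, hW, hAW, hWA⟩ := hnot
  exact ⟨c, W, hW, hAW, hWA, hP.prop.2 c W hW (hAW.mono (inter_subset_inter_right hAP.1))⟩

theorem edgeExcess_le_of_subset (hP : IsWheelComponent G P) (hAP : A ⊆ P) (hA : A.Nonempty) :
    edgeExcess G A ≤ edgeExcess G P := by
  obtain ⟨B, hAB, hB⟩ := {B ∈ P.powerset | edgeExcess G A ≤ edgeExcess G B}.exists_le_maximal
    (mem_filter.2 ⟨mem_powerset.2 hAP, le_rfl⟩)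
  obtain ⟨hBP, hle⟩ := mem_filter.1 hB.prop
  rw [mem_powerset] at hBP
  obtain rfl | hBP := hBP.eq_or_ssubset
  · exact hle
  obtain ⟨c, W, hW, hBW, hWB, hWP⟩ := hP.exists_isWheel_not_subset hBP (hA.mono hAB)
  have hunion : B ∪ W ⊆ B := hB.le_of_ge (mem_filter.2 ⟨mem_powerset.2 (union_subset hBP.1 hWP),
    hle.trans (hW.edgeExcess_le_union hBW)⟩) subset_union_left
  exact absurd (subset_union_right.trans hunion) hWB

theorem neg_four_le_edgeExcess (hP : IsWheelComponent G P) : -4 ≤ edgeExcess G P := by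
  obtain ⟨x, hx⟩ := hP.prop.1
  rw [← edgeExcess_singleton G x]
  exact hP.edgeExcess_le_of_subset (singleton_subset_iff.2 hx) (singleton_nonempty x)

theorem exists_isWheel_subset (hP : IsWheelComponent G P) (hG : LocallyNonforesty G) {x : V}
    (hx : x ∈ P) : ∃ W, IsWheel G x W ∧ W ⊆ P := by
  obtain ⟨W, hW⟩ := hG.exists_isWheel x
  exact ⟨W, hW, hP.prop.2 x W hW ⟨x, mem_inter.2 ⟨hx, hW.hub_mem⟩⟩⟩

theorem four_le_card (hP : IsWheelComponent G P) (hG : LocallyNonforesty G) : 4 ≤ #P := by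
  obtain ⟨x, hx⟩ := hP.prop.1
  obtain ⟨W, hW, hWP⟩ := hP.exists_isWheel_subset hG hx
  exact hW.four_le_card.trans (card_le_card hWP)

theorem exists_isWheel_card_eq_four (hP : IsWheelComponent G P) (hG : LocallyNonforesty G)
    (htight : edgeExcess G P < 0) : ∃ c W, IsWheel G c W ∧ W ⊆ P ∧ #W = 4 := by
  have hsum : ∑ x ∈ P, #{y ∈ P | G.Adj x y} < ∑ _x ∈ P, 4 := by
    rw [← card_interedges_eq_sum, sum_const, smul_eq_mul]
    rw [edgeExcess] at htight
    omega
  obtain ⟨x, hx, hdeg⟩ := exists_lt_of_sum_lt hsum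
  obtain ⟨W, hW, hWP⟩ := hP.exists_isWheel_subset hG hx
  have hmono : #{y ∈ W | G.Adj x y} ≤ #{y ∈ P | G.Adj x y} :=
    card_le_card (filter_subset_filter _ hWP)
  have := hW.card_adj_hub_add_one
  have := hW.four_le_card
  exact ⟨x, W, hW, hWP, by omega⟩

theorem card_eq_four_or_exists_cut (hP : IsWheelComponent G P) (hG : LocallyNonforesty G)
    (htight : edgeExcess G P ≤ -4) :
    #P = 4 ∨ ∃ A W, A ∪ W = P ∧ 4 ≤ #A ∧ 4 ≤ #W ∧ #(A ∩ W) = 1 ∧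
      G.interedges (A \ W) (W \ A) = ∅ := by
  obtain ⟨c, W₀, hW₀, hW₀P, hcard⟩ := hP.exists_isWheel_card_eq_four hG (by omega)
  obtain rfl | hW₀P := hW₀P.eq_or_ssubset
  · exact .inl hcard
  obtain ⟨A, hW₀A, hA⟩ := {A ∈ P.ssubsets | -4 ≤ edgeExcess G A}.exists_le_maximal
    (mem_filter.2 ⟨mem_ssubsets.2 hW₀P, hW₀.neg_four_le_edgeExcess⟩)
  obtain ⟨hAP, hAtight⟩ := mem_filter.1 hA.prop
  rw [mem_ssubsets] at hAP
  have hcardA : 4 ≤ #A := hcard.symm.trans_le (card_le_card hW₀A)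
  obtain ⟨c', W, hW, hAW, hWA, hWP⟩ :=
    hP.exists_isWheel_not_subset hAP (card_pos.1 (by omega))
  have hunion : A ∪ W = P := by
    by_contra hne
    have hmem : A ∪ W ∈ {A ∈ P.ssubsets | -4 ≤ edgeExcess G A} :=
      mem_filter.2 ⟨mem_ssubsets.2 ((union_subset hAP.1 hWP).ssubset_of_ne hne),
        hAtight.trans (hW.edgeExcess_le_union hAW)⟩
    exact hWA (subset_union_right.trans (hA.le_of_ge hmem subset_union_left))
  have hle : edgeExcess G (A ∪ W) ≤ edgeExcess G A := hunion ▸ htight.trans hAtight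
  exact .inr ⟨A, W, hunion, hcardA, hW.four_le_card, hW.card_inter_eq_one hAW hWA hle,
    hW.interedges_sdiff_eq_empty hAW hle⟩

end IsWheelComponent
end WheelComponent

namespace KConnected

variable {V : Type*} [Fintype V] {G : SimpleGraph V}

theorem exists_adj_of_ne (hG : KConnected G 2) {S : Set V} {x u v : V} (hu : u ∈ S) (hux : u ≠ x)
    (hv : v ∉ S) (hvx : v ≠ x) : ∃ a ∈ S, ∃ b ∉ S, a ≠ x ∧ b ≠ x ∧ G.Adj a b := by
  have hconn : (G.induce {x}ᶜ).Preconnected := by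
    rw [← coe_singleton]
    exact (hG.2 {x} (by simp)).preconnected
  obtain ⟨a, hax, b, hbx, ha, hb, hab⟩ := exists_adj_of_preconnected_induce hconn hux hvx hu hv
  exact ⟨a, ha, b, hb, hax, hbx, hab⟩

variable [DecidableEq V] [DecidableRel G.Adj]

theorem two_le_card_interedges_compl (hG : KConnected G 2) {P : Finset V} (hP : 1 < #P)
    (hne : P ≠ univ) : 2 ≤ #(G.interedges P Pᶜ) := by
  obtain ⟨q, hq⟩ : ∃ q, q ∉ P := by simpa [eq_univ_iff_forall] using hne
  have avoiding (x : V) (hx : x ∈ P) : ∃ e ∈ G.interedges P Pᶜ, e.1 ≠ x := by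
    obtain ⟨u, hu, hux⟩ := exists_mem_ne hP x
    obtain ⟨a, ha, b, hb, hax, -, hab⟩ := hG.exists_adj_of_ne (S := P) hu hux hq
      (ne_of_mem_of_not_mem hx hq).symm
    exact ⟨(a, b), G.mk_mem_interedges_iff.2 ⟨ha, mem_compl.2 hb, hab⟩, hax⟩
  obtain ⟨x, hx⟩ := card_pos.1 (Nat.zero_lt_one.trans hP)
  obtain ⟨e, he, -⟩ := avoiding x hx
  obtain ⟨f, hf, hne⟩ := avoiding e.1 (G.mem_interedges_iff.1 he).1
  exact one_lt_card.2 ⟨e, he, f, hf, fun h => hne (h ▸ rfl)⟩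

theorem interedges_sdiff_nonempty (hG : KConnected G 2) {A W : Finset V} (hunion : A ∪ W = univ)
    (hA : 1 < #A) (hW : 1 < #W) (hAW : #(A ∩ W) = 1) :
    (G.interedges (A \ W) (W \ A)).Nonempty := by
  obtain ⟨x, hx⟩ := card_eq_one.1 hAW
  obtain ⟨u, hu, hux⟩ := exists_mem_ne hA x
  obtain ⟨v, hv, hvx⟩ := exists_mem_ne hW x
  have eq_of_mem {y : V} (hyA : y ∈ A) (hyW : y ∈ W) : y = x := by
    rw [← mem_singleton, ← hx]
    exact mem_inter.2 ⟨hyA, hyW⟩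
  obtain ⟨a, ha, b, hb, hax, -, hab⟩ := hG.exists_adj_of_ne (S := A) hu hux
    (fun hvA => hvx (eq_of_mem hvA hv)) hvx
  have hbW : b ∈ W := (mem_union.1 (hunion ▸ mem_univ b)).resolve_left hb
  exact ⟨(a, b), G.mk_mem_interedges_iff.2
    ⟨mem_sdiff.2 ⟨ha, fun haW => hax (eq_of_mem ha haW)⟩, mem_sdiff.2 ⟨hbW, hb⟩, hab⟩⟩

end KConnected

/-- The function `g` of the theorem. -/
def minSize (n : ℕ) : ℕ :=
  if n % 4 = 0 ∨ n % 4 = 3 then 2 * n - n / 4 else 2 * n + 1 - n / 4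

section DegreeSum

variable {V : Type*} [Fintype V] [DecidableEq V] {G : SimpleGraph V} [DecidableRel G.Adj]

theorem sum_degree_eq_card_interedges_add (S : Finset V) :
    ∑ v ∈ S, G.degree v = #(G.interedges S S) + #(G.interedges S Sᶜ) := by
  rw [← card_interedges_union_right G disjoint_compl_right, union_compl, card_interedges_eq_sum]
  exact sum_congr rfl fun v _ => by rw [← card_neighborFinset_eq_degree, neighborFinset_eq_filter]

theorem IsWheelComponent.seven_mul_card_le_sum_degree {P : Finset V} (hP : IsWheelComponent G P)
    (hG : LocallyNonforesty G) (hconn : KConnected G 2) (hV : 8 ≤ Fintype.card V) :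
    7 * #P ≤ 2 * ∑ v ∈ P, G.degree v ∧
      (4 ∣ #P ∨ 7 * #P + 3 ≤ 2 * ∑ v ∈ P, G.degree v) := by
  have hcard := hP.four_le_card hG
  have hexcess := hP.neg_four_le_edgeExcess
  have hcut := hP.card_eq_four_or_exists_cut hG
  rw [sum_degree_eq_card_interedges_add]
  obtain rfl | hne := eq_or_ne P univ
  · have hnot_tight : ¬ edgeExcess G univ ≤ -4 := by
      intro htight
      obtain hfour | ⟨A, W, hunion, hA, hW, hAW, hempty⟩ := hcut htight
      · rw [card_univ] at hfour
        omega
      · exact (hconn.interedges_sdiff_nonempty hunion (by omega) (by omega) hAW).ne_empty hempty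
    rw [edgeExcess] at hnot_tight
    rw [← card_univ] at hV
    omega
  · have hout := hconn.two_le_card_interedges_compl (by omega) hne
    have hsmall : edgeExcess G P ≤ -4 → #P = 4 ∨ 7 ≤ #P := by
      refine fun htight => (hcut htight).imp_right ?_
      rintro ⟨A, W, rfl, hA, hW, hAW, -⟩
      have := card_union_add_card_inter A W
      omega
    rw [edgeExcess] at hexcess hsmall
    omega

theorem IsWheelClosed.seven_mul_card_le_sum_degree {S : Finset V} (hS : IsWheelClosed G S)
    (hG : LocallyNonforesty G) (hconn : KConnected G 2) (hV : 8 ≤ Fintype.card V) :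
    7 * #S ≤ 2 * ∑ v ∈ S, G.degree v ∧
      (4 ∣ #S ∨ 7 * #S + 3 ≤ 2 * ∑ v ∈ S, G.degree v) := by
  induction S using Finset.strongInduction with
  | H S ih =>
    obtain rfl | hne := S.eq_empty_or_nonempty
    · simp
    obtain ⟨P, hPS, hP⟩ := exists_minimal_le_of_wellFoundedLT
      (fun S : Finset V => S.Nonempty ∧ IsWheelClosed G S) S ⟨hne, hS⟩
    have hbound := IsWheelComponent.seven_mul_card_le_sum_degree hP hG hconn hV
    have hrest := ih (S \ P) (sdiff_ssubset hPS hP.prop.1) (hS.sdiff hP.prop.2)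
    rw [← sum_sdiff hPS, ← card_sdiff_add_card_eq_card hPS]
    omega

end DegreeSum

theorem minSize_le_ncard_edgeSet {V : Type*} [Fintype V] {G : SimpleGraph V}
    (hG : LocallyNonforesty G) (hconn : KConnected G 2) (hV : 8 ≤ Fintype.card V) :
    minSize (Fintype.card V) ≤ G.edgeSet.ncard := by
  classical
  have hclosed : IsWheelClosed G univ := fun _ W _ _ => subset_univ W
  have hbound := hclosed.seven_mul_card_le_sum_degree hG hconn hV
  rw [sum_degrees_eq_twice_card_edges, card_univ] at hbound
  rw [minSize, ← coe_edgeFinset, Set.ncard_coe_finset]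
  split_ifs <;> omega

theorem KConnected.of_isHamiltonian {V : Type*} [Fintype V] [DecidableEq V] {G : SimpleGraph V}
    (hG : G.IsHamiltonian) (hV : 2 < Fintype.card V) : KConnected G 2 := by
  refine ⟨hV, fun S hS => ?_⟩
  obtain hS | hS := Nat.le_one_iff_eq_zero_or_eq_one.1 (Nat.le_of_lt_succ hS)
  · rw [card_eq_zero.1 hS, coe_empty, Set.compl_empty]
    exact (induceUnivIso G).connected_iff.2 hG.connected
  · obtain ⟨x, rfl⟩ := card_eq_one.1 hS
    have : Nontrivial V := Fintype.one_lt_card_iff_nontrivial.1 (by omega)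
    obtain ⟨y, p, hp⟩ : ∃ y, ∃ p : G.Walk y x, p.IsHamiltonian :=
      let ⟨p, hp⟩ := hG.exists_isHamiltonianCycle x
      ⟨p.snd, p.tail, hp.isHamiltonian_tail⟩
    have hnil : ¬ p.Nil := by
      rw [Walk.not_nil_iff_lt_length, hp.length_eq]
      omega
    have hsplit := p.dropLast_support_concat
    have hnotMem : x ∉ p.support.dropLast := by
      have hnodup := hp.isPath.support_nodup
      rw [← hsplit] at hnodup
      exact fun hx => List.disjoint_of_nodup_append hnodup hx (List.mem_singleton_self x)
    have hsupport : {z | z ∈ p.dropLast.support} = ({x} : Set V)ᶜ := by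
      ext z
      rw [Set.mem_ofPred, Walk.support_dropLast hnil]
      refine ⟨fun hz => ne_of_mem_of_not_mem hz hnotMem, fun hz => ?_⟩
      have hmem := hp.mem_support z
      rw [← hsplit, List.mem_append, List.mem_singleton] at hmem
      exact hmem.resolve_right hz
    rw [coe_singleton, ← hsupport]
    exact p.dropLast.connected_induce_support

theorem not_isAcyclic_induce_neighborSet_of_isNClique {V : Type*} {G : SimpleGraph V} {n : ℕ}
    {Q : Finset V} {v : V} (hQ : G.IsNClique n Q) (hn : 4 ≤ n) (hv : v ∈ Q) :
    ¬ (G.induce (G.neighborSet v)).IsAcyclic := by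
  classical
  intro hacyclic
  have hsub : ∀ u ∈ Q.erase v, u ∈ G.neighborSet v := fun u hu =>
    hQ.isClique hv (mem_of_mem_erase hu) (ne_of_mem_erase hu).symm
  refine hacyclic.cliqueFree (n := n - 1) (by omega) ((Q.erase v).subtype (· ∈ G.neighborSet v)) ?_
  rw [isNClique_induce_iff]
  convert hQ.erase_of_mem hv
  exact subtype_map_of_mem hsub

section CycleGraph

variable {n : ℕ}

theorem isHamiltonian_cycleGraph (hn : 3 ≤ n) : (cycleGraph n).IsHamiltonian := by
  obtain ⟨m, rfl⟩ := Nat.exists_eq_add_of_le' hn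
  exact fun _ => ⟨0, cycleGraph.cycle m, Walk.isHamiltonianCycle_iff_isCycle_and_length_eq.2
    ⟨cycleGraph.isCycle_cycle, by rw [cycleGraph.length_cycle, Fintype.card_fin]⟩⟩

theorem ncard_edgeSet_cycleGraph (hn : 3 ≤ n) : (cycleGraph n).edgeSet.ncard = n := by
  classical
  obtain ⟨m, rfl⟩ := Nat.exists_eq_add_of_le' hn
  have hsum := (cycleGraph (m + 3)).sum_degrees_eq_twice_card_edges
  simp only [cycleGraph_degree_three_le, sum_const, card_univ, Fintype.card_fin,
    smul_eq_mul] at hsum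
  rw [← coe_edgeFinset, Set.ncard_coe_finset]
  omega

theorem cycleGraph_adj_ofNat_succ [NeZero n] (hn : 2 ≤ n) (k : ℕ) :
    (cycleGraph n).Adj (Fin.ofNat n k) (Fin.ofNat n (k + 1)) := by
  have hsub : Fin.ofNat n (k + 1) - Fin.ofNat n k = 1 := by
    rw [sub_eq_iff_eq_add', Fin.ext_iff]
    simp [Fin.val_add]
  rw [cycleGraph_adj', hsub]
  right
  simp [Nat.mod_eq_of_lt hn]

end CycleGraph

/-- The first vertices of the quadruples that become cliques in the extremal graph. They are `n / 4`
disjoint quadruples, followed by the last four vertices. -/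
def quadStarts (n : ℕ) : Finset ℕ :=
  insert (n - 4) ((range (n / 4)).image (4 * ·))

theorem add_four_le_of_mem_quadStarts {n : ℕ} (hn : 4 ≤ n) {s : ℕ} (hs : s ∈ quadStarts n) :
    s + 4 ≤ n := by
  simp only [quadStarts, mem_insert, mem_image, mem_range] at hs
  omega

theorem exists_mem_quadStarts {n : ℕ} (hn : 4 ≤ n) (v : Fin n) :
    ∃ s ∈ quadStarts n, ∃ i < 4, (v : ℕ) = s + i := by
  simp only [quadStarts, mem_insert, mem_image, mem_range]
  by_cases hv : (v : ℕ) / 4 < n / 4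
  · exact ⟨4 * (v / 4), .inr ⟨v / 4, hv, rfl⟩, v % 4, by omega, by omega⟩
  · exact ⟨n - 4, .inl rfl, v + 4 - n, by omega, by omega⟩

section Extremal

variable (n : ℕ) [NeZero n]

/-- The three edges that turn the path `s, s + 1, s + 2, s + 3` into a complete graph. -/
def quadChords (s : ℕ) : Finset (Sym2 (Fin n)) :=
  {s(Fin.ofNat n s, Fin.ofNat n (s + 2)), s(Fin.ofNat n (s + 1), Fin.ofNat n (s + 3)),
    s(Fin.ofNat n s, Fin.ofNat n (s + 3))}

/-- The Hamiltonian cycle `0, 1, …, n - 1` together with the chords that make each quadruple of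
`quadStarts n` a clique. -/
def extremalGraph : SimpleGraph (Fin n) :=
  cycleGraph n ⊔ fromEdgeSet ((quadStarts n).biUnion (quadChords n))

theorem extremalGraph_isHamiltonian (hn : 3 ≤ n) : (extremalGraph n).IsHamiltonian :=
  (isHamiltonian_cycleGraph hn).mono le_sup_left

variable {n}

theorem isNClique_of_quadChords_subset {G : SimpleGraph (Fin n)} {s : ℕ} (hn : 2 ≤ n)
    (hcycle : cycleGraph n ≤ G) (hchords : (quadChords n s : Set (Sym2 (Fin n))) ⊆ G.edgeSet) :
    G.IsNClique 4
      {Fin.ofNat n s, Fin.ofNat n (s + 1), Fin.ofNat n (s + 2), Fin.ofNat n (s + 3)} := by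
  have adj_succ (k : ℕ) := hcycle (cycleGraph_adj_ofNat_succ hn k)
  simp only [quadChords, coe_insert, coe_singleton, Set.insert_subset_iff,
    Set.singleton_subset_iff, mem_edgeSet] at hchords
  obtain ⟨h02, h13, h03⟩ := hchords
  have htriple := is3Clique_triple_iff.2 ⟨adj_succ (s + 1), h13, adj_succ (s + 2)⟩
  refine htriple.insert ?_
  simp only [mem_insert, mem_singleton, forall_eq_or_imp, forall_eq]
  exact ⟨adj_succ s, h02, h03⟩

theorem not_isDiag_of_mem_quadChords {s : ℕ} (hs : s + 4 ≤ n) {e : Sym2 (Fin n)}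
    (he : e ∈ quadChords n s) : ¬ e.IsDiag := by
  simp only [quadChords, mem_insert, mem_singleton] at he
  obtain rfl | rfl | rfl := he <;> rw [Sym2.mk_isDiag_iff, Fin.ext_iff, Fin.val_ofNat,
    Fin.val_ofNat, Nat.mod_eq_of_lt (by omega), Nat.mod_eq_of_lt (by omega)] <;> omega

theorem quadChords_subset_edgeSet_extremalGraph (hn : 4 ≤ n) {s : ℕ} (hs : s ∈ quadStarts n) :
    (quadChords n s : Set (Sym2 (Fin n))) ⊆ (extremalGraph n).edgeSet := by
  intro e he
  rw [extremalGraph, edgeSet_sup, edgeSet_fromEdgeSet]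
  exact .inr ⟨mem_biUnion.2 ⟨s, hs, he⟩,
    not_isDiag_of_mem_quadChords (add_four_le_of_mem_quadStarts hn hs) he⟩

theorem locallyNonforesty_extremalGraph (hn : 4 ≤ n) : LocallyNonforesty (extremalGraph n) := by
  intro v
  obtain ⟨s, hs, i, hi, hv⟩ := exists_mem_quadStarts hn v
  refine not_isAcyclic_induce_neighborSet_of_isNClique (isNClique_of_quadChords_subset (by omega)
    le_sup_left (quadChords_subset_edgeSet_extremalGraph hn hs)) le_rfl ?_
  rw [← Fin.ofNat_val_eq_self v, hv]
  interval_cases i <;> simp only [mem_insert, mem_singleton, add_zero, true_or, or_true]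

theorem card_quadChords_succ_union_le {s : ℕ} {F : Finset (Sym2 (Fin n))}
    (hF : quadChords n s ⊆ F) : #(quadChords n (s + 1) ∪ F) ≤ #F + 2 := by
  have hshared : s(Fin.ofNat n (s + 1), Fin.ofNat n (s + 3)) ∈ F := hF (by simp [quadChords])
  rw [quadChords, insert_union, insert_eq_of_mem (mem_union_right _ hshared)]
  refine (card_union_le _ _).trans ?_
  rw [add_comm]
  exact Nat.add_le_add_left card_le_two _

variable (n) in
theorem add_card_biUnion_quadChords_le (hn : 4 ≤ n) :
    n + #((quadStarts n).biUnion (quadChords n)) ≤ minSize n := by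
  set blockStarts := (range (n / 4)).image (4 * ·) with hblocks
  have hblockCard : #(blockStarts.biUnion (quadChords n)) ≤ n / 4 * 3 := by
    refine (card_biUnion_le_card_mul _ _ 3 fun s _ => card_le_three).trans ?_
    exact Nat.mul_le_mul_right 3 (card_image_le.trans_eq (card_range _))
  have hlast : 4 * (n / 4 - 1) ∈ blockStarts :=
    mem_image_of_mem _ (mem_range.2 (by omega))
  rw [quadStarts, ← hblocks, minSize]
  by_cases h0 : n % 4 = 0
  · rw [show n - 4 = 4 * (n / 4 - 1) by omega, insert_eq_of_mem hlast, if_pos (.inl h0)]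
    omega
  rw [biUnion_insert]
  by_cases h1 : n % 4 = 1
  · have hunion := card_quadChords_succ_union_le (subset_biUnion_of_mem (quadChords n) hlast)
    rw [show n - 4 = 4 * (n / 4 - 1) + 1 by omega, if_neg (by omega)]
    omega
  · have hunion := card_union_le (quadChords n (n - 4)) (blockStarts.biUnion (quadChords n))
    have hchords : #(quadChords n (n - 4)) ≤ 3 := card_le_three
    split_ifs <;> omega

theorem ncard_edgeSet_extremalGraph_le (hn : 4 ≤ n) :
    (extremalGraph n).edgeSet.ncard ≤ minSize n := by
  refine le_trans ?_ (add_card_biUnion_quadChords_le n hn)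
  rw [extremalGraph, edgeSet_sup, edgeSet_fromEdgeSet]
  refine (Set.ncard_union_le _ _).trans (Nat.add_le_add (ncard_edgeSet_cycleGraph (by omega)).le ?_)
  rw [← Set.ncard_coe_finset]
  exact Set.ncard_le_ncard Set.sdiff_subset (Set.toFinite _)

end Extremal

/-- `g n` is the least possible size: it is attained by some 2-connected locally
nonforesty graph of order `n`, and it is a lower bound for the sizes of all such graphs. -/
theorem stmt_6 (n : ℕ) (h8 : 8 ≤ n) :
    IsLeast {m : ℕ | ∃ G : SimpleGraph (Fin n),
        KConnected G 2 ∧ LocallyNonforesty G ∧ G.edgeSet.ncard = m}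
      (if n % 4 = 0 ∨ n % 4 = 3 then 2 * n - n / 4 else 2 * n + 1 - n / 4) := by
  change IsLeast _ (minSize n)
  have hlower (G : SimpleGraph (Fin n)) (hconn : KConnected G 2) (hG : LocallyNonforesty G) :
      minSize n ≤ G.edgeSet.ncard := by
    simpa only [Fintype.card_fin] using minSize_le_ncard_edgeSet hG hconn (by simpa using h8)
  constructor
  · have : NeZero n := ⟨by omega⟩
    have hconn : KConnected (extremalGraph n) 2 :=
      .of_isHamiltonian (extremalGraph_isHamiltonian n (by omega)) (by rw [Fintype.card_fin]; omega)
    have hG := locallyNonforesty_extremalGraph (n := n) (by omega)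
    have hupper := ncard_edgeSet_extremalGraph_le (n := n) (by omega)
    exact ⟨extremalGraph n, hconn, hG, hupper.antisymm (hlower _ hconn hG)⟩
  · rintro _ ⟨G, hconn, hG, rfl⟩
    exact hlower G hconn hG
end

section
/- Let n ≥ 8 and let G be a connected locally nonforesty graph of order n. Then the size of G is at least p(n), where p(n) = 2n − 1 − ⌊n/4⌋ if n ≡ 0 or 3 (mod 4), and p(n) = 2n − ⌊n/4⌋ otherwise. -/
/-!
The weight `4 e(U) - 7 |U|` of a vertex set `U` is supermodular in `U`. In a locally nonforesty
graph every vertex is the hub of a wheel, and every nonempty proper subset of a wheel weighs at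
least `3` less than the wheel, so adding a wheel to a set that meets it without containing it gains
weight at least `3`. Consequently the admissible sets, whose weight is `-4` or at least `-1`, can be
enlarged until they exhaust a connected graph. The delicate case is a wheel disjoint from `U` with
a single edge to `U`, whose rim has length `4` or `5`: the weight may then be `-3` or `-2`, but the
wheel centred at a rim vertex is not contained in the union, and adding it repairs the weight.
-/

section

open Finset SimpleGraph

variable {V : Type*} {G : SimpleGraph V}

lemma exists_adj_notMem_of_preconnected (hG : G.Preconnected) {S : Set V} (hne : S.Nonempty)
    (hS : S ≠ Set.univ) : ∃ u ∈ S, ∃ x ∉ S, G.Adj u x := by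
  obtain ⟨u, hu⟩ := hne
  obtain ⟨v, hv⟩ := (Set.ne_univ_iff_exists_notMem S).1 hS
  obtain ⟨p⟩ := hG u v
  obtain ⟨d, -, hfst, hsnd⟩ := p.exists_boundary_dart S hu hv
  exact ⟨d.fst, hfst, d.snd, hsnd, d.adj⟩

variable [DecidableRel G.Adj]

variable (G) in
/-- The edges of `G` with both endpoints in `U`, for a possibly infinite graph `G`. -/
def edgesWithin (U : Finset V) : Finset (Sym2 V) := U.sym2.filter (· ∈ G.edgeSet)

lemma mem_edgesWithin {U : Finset V} {e : Sym2 V} :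
    e ∈ edgesWithin G U ↔ (∀ a ∈ e, a ∈ U) ∧ e ∈ G.edgeSet := by
  simp [edgesWithin, mem_sym2_iff]

lemma mk_mem_edgesWithin {U : Finset V} {a b : V} :
    s(a, b) ∈ edgesWithin G U ↔ (a ∈ U ∧ b ∈ U) ∧ G.Adj a b := by
  simp [edgesWithin]

lemma edgesWithin_mono {A B : Finset V} (h : A ⊆ B) : edgesWithin G A ⊆ edgesWithin G B :=
  filter_subset_filter _ (sym2_mono h)

lemma edgesWithin_univ [Fintype V] : edgesWithin G univ = G.edgeFinset := by
  ext e
  simp [mem_edgesWithin]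

lemma edgesWithin_singleton (a : V) : edgesWithin G {a} = ∅ := by
  ext e
  induction e using Sym2.ind
  simp only [mk_mem_edgesWithin, mem_singleton, notMem_empty, iff_false]
  rintro ⟨⟨rfl, rfl⟩, h⟩
  exact h.ne rfl

lemma card_edgesWithin_le_choose_two (U : Finset V) : #(edgesWithin G U) ≤ (#U).choose 2 := by
  classical
  rw [← Sym2.card_image_offDiag]
  refine card_le_card fun e he ↦ ?_
  induction e using Sym2.ind with
  | _ a b =>
    obtain ⟨⟨ha, hb⟩, hab⟩ := mk_mem_edgesWithin.1 he
    exact mem_image.2 ⟨(a, b), mem_offDiag.2 ⟨ha, hb, hab.ne⟩, rfl⟩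

section

variable [DecidableEq V]

lemma edgesWithin_inter (A B : Finset V) :
    edgesWithin G (A ∩ B) = edgesWithin G A ∩ edgesWithin G B := by
  ext e
  simp only [mem_edgesWithin, mem_inter]
  grind

lemma card_edgesWithin_add_le_union_add_inter (A B : Finset V) :
    #(edgesWithin G A) + #(edgesWithin G B) ≤
      #(edgesWithin G (A ∪ B)) + #(edgesWithin G (A ∩ B)) := by
  rw [← card_union_add_card_inter, ← edgesWithin_inter]
  gcongr
  exact union_subset (edgesWithin_mono subset_union_left) (edgesWithin_mono subset_union_right)

lemma edgesWithin_union (A B : Finset V) :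
    edgesWithin G (A ∪ B) =
      edgesWithin G A ∪ edgesWithin G B ∪ (G.interedges A B).image Sym2.mk.uncurry := by
  ext e
  induction e using Sym2.ind with
  | _ a b =>
    simp only [mem_union, mk_mem_edgesWithin, mem_image, Prod.exists, mk_mem_interedges_iff,
      Function.uncurry_apply_pair, Sym2.eq_iff]
    grind [G.adj_comm a b]

lemma card_edgesWithin_union {A B : Finset V} (h : Disjoint A B) :
    #(edgesWithin G (A ∪ B)) =
      #(edgesWithin G A) + #(edgesWithin G B) + #(G.interedges A B) := by
  have hAB := Finset.disjoint_left.1 h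
  rw [edgesWithin_union, card_union_of_disjoint, card_union_of_disjoint, card_image_of_injOn]
  · rintro ⟨a, b⟩ hab ⟨c, d⟩ hcd heq
    simp only [mem_coe, mk_mem_interedges_iff] at hab hcd
    rcases Sym2.eq_iff.1 heq with ⟨rfl, rfl⟩ | ⟨rfl, rfl⟩
    · rfl
    · exact absurd hcd.2.1 (hAB hab.1)
  · rw [Finset.disjoint_left]
    intro e
    induction e using Sym2.ind with
    | _ a b =>
      simp only [mk_mem_edgesWithin]
      grind
  · rw [Finset.disjoint_left]
    intro e
    induction e using Sym2.ind with
    | _ a b =>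
      simp only [mem_union, mk_mem_edgesWithin, mem_image, Prod.exists, mk_mem_interedges_iff,
        Function.uncurry_apply_pair, Sym2.eq_iff]
      grind

lemma card_edgesWithin_insert {x : V} {A : Finset V} (hx : ∀ a ∈ A, G.Adj x a) :
    #(edgesWithin G (insert x A)) = #(edgesWithin G A) + #A := by
  have hxA : x ∉ A := fun h ↦ (hx x h).ne rfl
  have hstar : G.interedges {x} A = {x} ×ˢ A := filter_true_of_mem (by simpa using hx)
  rw [insert_eq, card_edgesWithin_union (disjoint_singleton_left.2 hxA), hstar,
    edgesWithin_singleton, card_product, card_empty, card_singleton]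
  ring

end

/-! ### Induced cycles -/

variable (G) in
/-- `C` is the vertex set of an induced cycle of `G`. Since a finite graph with at least as many
edges as vertices contains a cycle, these are exactly the minimal nonempty vertex sets spanning at
least as many edges as they have vertices. -/
def IsInducedCycle (C : Finset V) : Prop :=
  Minimal (fun A : Finset V ↦ A.Nonempty ∧ #A ≤ #(edgesWithin G A)) C

namespace IsInducedCycle

variable {C : Finset V}

lemma card_le (hC : IsInducedCycle G C) : #C ≤ #(edgesWithin G C) := hC.prop.2

lemma card_edgesWithin_lt_of_ssubset (hC : IsInducedCycle G C) {A : Finset V} (hA : A ⊂ C)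
    (hne : A.Nonempty) : #(edgesWithin G A) < #A :=
  not_le.1 fun h ↦ hC.not_prop_of_lt hA ⟨hne, h⟩

lemma three_le_card (hC : IsInducedCycle G C) : 3 ≤ #C := by
  have hpos := hC.prop.1.card_pos
  have hle := hC.card_le.trans (card_edgesWithin_le_choose_two C)
  by_contra! hlt
  interval_cases #C <;> simp at hle

lemma card_eq_three_of_adj (hC : IsInducedCycle G C) {a b c : V} (ha : a ∈ C) (hb : b ∈ C)
    (hc : c ∈ C) (hab : G.Adj a b) (hac : G.Adj a c) (hbc : G.Adj b c) : #C = 3 := by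
  classical
  have hcard : #{a, b, c} = 3 := card_eq_three.2 ⟨a, b, c, hab.ne, hac.ne, hbc.ne, rfl⟩
  have hedges : #(edgesWithin G {a, b, c}) = 3 := by
    rw [card_edgesWithin_insert (by simp [hab, hac]), card_edgesWithin_insert (by simpa using hbc),
      edgesWithin_singleton, card_pair hbc.ne, card_singleton, card_empty]
  have hsub : {a, b, c} ⊆ C := by simp [insert_subset_iff, ha, hb, hc]
  rw [← hC.eq_of_le ⟨insert_nonempty _ _, (hcard.trans hedges.symm).le⟩ hsub, hcard]

end IsInducedCycle

lemma card_support_le_card_edgesWithin_of_isCycle [DecidableEq V] {v : V} {p : G.Walk v v}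
    (hp : p.IsCycle) : #p.support.toFinset ≤ #(edgesWithin G p.support.toFinset) := by
  have hcard : #p.support.toFinset = p.length := by
    rw [← p.cons_tail_support, List.toFinset_cons, insert_eq_of_mem
      (List.mem_toFinset.2 (Walk.end_mem_tail_support hp.not_nil)),
      List.toFinset_card_of_nodup hp.support_nodup, List.length_tail, Walk.length_support,
      Nat.add_sub_cancel]
  have hsub : p.edges.toFinset ⊆ edgesWithin G p.support.toFinset := fun e he ↦ by
    rw [List.mem_toFinset] at he
    exact mem_edgesWithin.2 ⟨fun a ha ↦ List.mem_toFinset.2 (p.mem_support_of_mem_edges he ha),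
      p.edges_subset_edgeSet he⟩
  rw [hcard, ← p.length_edges, ← List.toFinset_card_of_nodup hp.edges_nodup]
  exact card_le_card hsub

lemma exists_isInducedCycle_of_not_isAcyclic_induce {S : Set V} (hS : ¬(G.induce S).IsAcyclic) :
    ∃ C : Finset V, ↑C ⊆ S ∧ IsInducedCycle G C := by
  classical
  obtain ⟨v, p, hp⟩ : ∃ v, ∃ p : (G.induce S).Walk v v, p.IsCycle := by
    simpa [IsAcyclic] using hS
  let q := p.map (Embedding.induce S).toHom
  have hq : q.IsCycle := hp.map Subtype.val_injective
  obtain ⟨C, hCq, hC⟩ := exists_minimal_le_of_wellFoundedLT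
    (fun A : Finset V ↦ A.Nonempty ∧ #A ≤ #(edgesWithin G A)) q.support.toFinset
    ⟨⟨_, List.mem_toFinset.2 q.start_mem_support⟩,
      card_support_le_card_edgesWithin_of_isCycle hq⟩
  refine ⟨C, fun c hc ↦ ?_, hC⟩
  obtain ⟨y, -, rfl⟩ := List.mem_map.1 (Walk.support_map _ p ▸ List.mem_toFinset.1 (hCq hc))
  exact y.2

/-! ### The weight -/

variable (G) in
/-- The supermodular potential `4 e(U) - 7 |U|`, whose value on the whole vertex set the theorem
bounds from below. -/
def weight (U : Finset V) : ℤ := 4 * #(edgesWithin G U) - 7 * #U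

lemma weight_empty : weight G ∅ = 0 := by simp [weight, edgesWithin]

section

variable [DecidableEq V]

lemma weight_add_weight_le (A B : Finset V) :
    weight G A + weight G B ≤ weight G (A ∪ B) + weight G (A ∩ B) := by
  have hedges := card_edgesWithin_add_le_union_add_inter (G := G) A B
  have hcard := card_union_add_card_inter A B
  unfold weight
  omega

lemma weight_union {A B : Finset V} (h : Disjoint A B) :
    weight G (A ∪ B) = weight G A + weight G B + 4 * #(G.interedges A B) := by
  unfold weight
  rw [card_edgesWithin_union h, card_union_of_disjoint h]
  push_cast
  ring

lemma weight_insert {x : V} {A : Finset V} (hx : ∀ a ∈ A, G.Adj x a) :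
    weight G (insert x A) = weight G A + 4 * #A - 7 := by
  unfold weight
  rw [card_edgesWithin_insert hx, card_insert_of_notMem fun h ↦ (hx x h).ne rfl]
  push_cast
  ring

end

lemma IsInducedCycle.neg_three_mul_card_le_weight {C : Finset V} (hC : IsInducedCycle G C) :
    -3 * #C ≤ weight G C := by
  have := hC.card_le
  unfold weight
  omega

lemma IsInducedCycle.weight_add_four_le_of_ssubset {C A : Finset V} (hC : IsInducedCycle G C)
    (hA : A ⊂ C) (hne : A.Nonempty) : weight G A + 4 ≤ -3 * #A := by
  have := hC.card_edgesWithin_lt_of_ssubset hA hne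
  unfold weight
  omega

/-! ### Wheels -/

variable (G) in
/-- `G` contains a wheel with hub `x` whose rim is the induced cycle on `C`; the vertex set of the
wheel is `insert x C`. -/
structure IsWheel_s12 (x : V) (C : Finset V) : Prop where
  isInducedCycle : IsInducedCycle G C
  adj : ∀ c ∈ C, G.Adj x c

namespace IsWheel_s12

variable {x : V} {C : Finset V}

lemma three_le_card (h : IsWheel_s12 G x C) : 3 ≤ #C := h.isInducedCycle.three_le_card

lemma hub_notMem (h : IsWheel_s12 G x C) : x ∉ C := fun hx ↦ (h.adj x hx).ne rfl

variable [DecidableEq V]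

lemma card_sub_seven_le_weight (h : IsWheel_s12 G x C) : (#C : ℤ) - 7 ≤ weight G (insert x C) := by
  have := h.isInducedCycle.neg_three_mul_card_le_weight
  rw [weight_insert h.adj]
  linarith

lemma weight_eq_neg_four (h : IsWheel_s12 G x C) (hC : #C = 3) : weight G (insert x C) = -4 := by
  have hlower := h.isInducedCycle.card_le
  have hupper := card_edgesWithin_le_choose_two (G := G) C
  rw [hC] at hlower hupper
  rw [weight_insert h.adj, weight, hC, hupper.antisymm hlower]
  norm_num

lemma weight_insert_add_three_le_of_ssubset_rim (h : IsWheel_s12 G x C) {A : Finset V} (hA : A ⊂ C) :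
    weight G (insert x A) + 3 ≤ weight G (insert x C) := by
  have hcard := card_lt_card hA
  have hwheel := h.card_sub_seven_le_weight
  have hthree := h.three_le_card
  rw [weight_insert fun a ha ↦ h.adj a (hA.subset ha)]
  obtain rfl | hne := A.eq_empty_or_nonempty
  · rw [weight_empty, card_empty]
    omega
  · have := h.isInducedCycle.weight_add_four_le_of_ssubset hA hne
    omega

lemma weight_add_three_le_of_subset_rim (h : IsWheel_s12 G x C) {A : Finset V} (hA : A ⊆ C)
    (hne : A.Nonempty) : weight G A + 3 ≤ weight G (insert x C) := by
  have hthree := h.three_le_card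
  obtain rfl | hss := hA.eq_or_ssubset
  · rw [weight_insert h.adj]
    omega
  · have hproper := h.isInducedCycle.weight_add_four_le_of_ssubset hss hne
    have hwheel := h.card_sub_seven_le_weight
    have hpos := hne.card_pos
    omega

lemma weight_add_three_le_of_ssubset (h : IsWheel_s12 G x C) {B : Finset V} (hB : B ⊂ insert x C)
    (hne : B.Nonempty) : weight G B + 3 ≤ weight G (insert x C) := by
  by_cases hx : x ∈ B
  · have hss : B.erase x ⊂ C := Finset.ssubset_iff_subset_ne.2
      ⟨subset_insert_iff.1 hB.subset, fun heq ↦ hB.ne (heq ▸ (insert_erase hx).symm)⟩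
    simpa only [insert_erase hx] using h.weight_insert_add_three_le_of_ssubset_rim hss
  · exact h.weight_add_three_le_of_subset_rim ((subset_insert_iff_of_notMem hx).1 hB.subset) hne

lemma weight_add_three_le_weight_union (h : IsWheel_s12 G x C) {U : Finset V}
    (hsub : ¬insert x C ⊆ U) (hne : (U ∩ insert x C).Nonempty) :
    weight G U + 3 ≤ weight G (U ∪ insert x C) := by
  have hss : U ∩ insert x C ⊂ insert x C :=
    inter_subset_right.ssubset_of_ne fun heq ↦ hsub (inter_eq_right.1 heq)
  have hgain := h.weight_add_three_le_of_ssubset hss hne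
  have hsuper := weight_add_weight_le (G := G) U (insert x C)
  linarith

lemma not_rim_subset_insert (h : IsWheel_s12 G x C) (hC : 4 ≤ #C) {w : V} (hw : w ∈ C)
    {D : Finset V} (hD : IsWheel_s12 G w D) : ¬D ⊆ insert x C := by
  intro hsub
  by_cases hx : x ∈ D
  · have hrim : D.erase x ⊆ C := subset_insert_iff.1 hsub
    obtain ⟨e, he⟩ : (edgesWithin G (D.erase x)).Nonempty := by
      have hedges := card_edgesWithin_insert fun a ha ↦ h.adj a (hrim ha)
      have hcard := card_erase_add_one hx
      have hle := hD.isInducedCycle.card_le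
      rw [insert_erase hx] at hedges
      exact card_pos.1 (by omega)
    induction e using Sym2.ind with
    | _ a b =>
      obtain ⟨⟨ha, hb⟩, hab⟩ := mk_mem_edgesWithin.1 he
      have hthree := h.isInducedCycle.card_eq_three_of_adj hw (hrim ha) (hrim hb)
        (hD.adj a (mem_of_mem_erase ha)) (hD.adj b (mem_of_mem_erase hb)) hab
      omega
  · have hDC : D = C := h.isInducedCycle.eq_of_le hD.isInducedCycle.prop
      ((subset_insert_iff_of_notMem hx).1 hsub)
    exact hD.hub_notMem (hDC ▸ hw)

end IsWheel_s12

lemma LocallyNonforesty.exists_isWheel_s12 (hG : LocallyNonforesty G) (x : V) :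
    ∃ C, IsWheel_s12 G x C := by
  obtain ⟨C, hCx, hC⟩ := exists_isInducedCycle_of_not_isAcyclic_induce (hG x)
  exact ⟨C, hC, hCx⟩

/-! ### Admissible sets -/

variable (G) in
/-- The nonempty vertex sets whose weight is compatible with the bound of the theorem. The weights
`-3` and `-2` have to be excluded because of the rounding in that bound. -/
def IsAdmissible (U : Finset V) : Prop :=
  U.Nonempty ∧ (weight G U = -4 ∨ -1 ≤ weight G U)

variable {U C : Finset V} {x : V}

lemma IsAdmissible.neg_four_le_weight (hU : IsAdmissible G U) : -4 ≤ weight G U := by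
  rcases hU.2 with h | h <;> omega

section

variable [DecidableEq V]

lemma LocallyNonforesty.exists_isAdmissible_superset_of_not_adj_rim (hG : LocallyNonforesty G)
    (h : IsWheel_s12 G x C) (hC : 4 ≤ #C) {w : V} (hw : w ∈ C) (hUw : ∀ u ∈ U, ¬G.Adj u w)
    (hweight : -4 ≤ weight G (U ∪ insert x C)) :
    ∃ U', U ∪ insert x C ⊆ U' ∧ IsAdmissible G U' := by
  obtain ⟨D, hD⟩ := hG.exists_isWheel_s12 w
  have hsub : ¬insert w D ⊆ U ∪ insert x C := fun hsub ↦
    h.not_rim_subset_insert hC hw hD fun d hd ↦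
      (mem_union.1 (hsub (mem_insert_of_mem hd))).resolve_left
        fun hdU ↦ hUw d hdU (hD.adj d hd).symm
  have hne : ((U ∪ insert x C) ∩ insert w D).Nonempty := ⟨w, by simp [hw]⟩
  have hgain := hD.weight_add_three_le_weight_union hsub hne
  exact ⟨_, subset_union_left, (hne.mono inter_subset_left).mono subset_union_left,
    Or.inr (by linarith)⟩

lemma IsAdmissible.exists_superset_of_disjoint (hU : IsAdmissible G U)
    (hG : LocallyNonforesty G) (h : IsWheel_s12 G x C) (hdisj : Disjoint U (insert x C)) {u : V}
    (hu : u ∈ U) (hux : G.Adj u x) : ∃ U', U ∪ insert x C ⊆ U' ∧ IsAdmissible G U' := by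
  have hne : (U ∪ insert x C).Nonempty := hU.1.mono subset_union_left
  have hweight := weight_union (G := G) hdisj
  have hbound := h.card_sub_seven_le_weight
  have hU4 := hU.neg_four_le_weight
  have hux_mem : (u, x) ∈ G.interedges U (insert x C) :=
    G.mk_mem_interedges_iff.2 ⟨hu, mem_insert_self x C, hux⟩
  have hpos : 0 < #(G.interedges U (insert x C)) := card_pos.2 ⟨_, hux_mem⟩
  obtain hthree | hfour := h.three_le_card.eq_or_lt
  · have htriangle := h.weight_eq_neg_four hthree.symm
    obtain ⟨-, hU | hU⟩ := hU <;> exact ⟨_, subset_rfl, hne, by omega⟩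
  obtain ⟨c, hc⟩ := h.isInducedCycle.prop.1
  by_cases hUc : ∀ v ∈ U, ¬G.Adj v c
  · exact hG.exists_isAdmissible_superset_of_not_adj_rim h hfour hc hUc (by omega)
  · push Not at hUc
    obtain ⟨v, hv, hvc⟩ := hUc
    have hvc_mem : (v, c) ∈ G.interedges U (insert x C) :=
      G.mk_mem_interedges_iff.2 ⟨hv, mem_insert_of_mem hc, hvc⟩
    have hxc : (u, x) ≠ (v, c) := by
      rintro ⟨⟩
      exact h.hub_notMem hc
    have htwo := one_lt_card.2 ⟨_, hux_mem, _, hvc_mem, hxc⟩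
    exact ⟨_, subset_rfl, hne, by omega⟩

end

lemma LocallyNonforesty.exists_isAdmissible [Nonempty V] (hG : LocallyNonforesty G) :
    ∃ U, IsAdmissible G U := by
  classical
  obtain ⟨C, hC⟩ := hG.exists_isWheel_s12 (Classical.arbitrary V)
  obtain hthree | hfour := hC.three_le_card.eq_or_lt
  · exact ⟨_, insert_nonempty _ C, Or.inl (hC.weight_eq_neg_four hthree.symm)⟩
  · have hweight := hC.card_sub_seven_le_weight
    obtain ⟨w, hw⟩ := hC.isInducedCycle.prop.1
    obtain ⟨U, -, hU⟩ := hG.exists_isAdmissible_superset_of_not_adj_rim (U := ∅) hC hfour hw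
      (by simp) (by rw [empty_union]; omega)
    exact ⟨U, hU⟩

lemma IsAdmissible.exists_ssuperset (hU : IsAdmissible G U) (hconn : G.Preconnected)
    (hG : LocallyNonforesty G) (hne : (U : Set V) ≠ Set.univ) :
    ∃ U', U ⊂ U' ∧ IsAdmissible G U' := by
  classical
  obtain ⟨u, hu, x, hx, hux⟩ := exists_adj_notMem_of_preconnected hconn hU.1 hne
  obtain ⟨C, hC⟩ := hG.exists_isWheel_s12 x
  have hxC : x ∈ insert x C := mem_insert_self x C
  have hss : U ⊂ U ∪ insert x C :=
    (ssubset_iff_of_subset subset_union_left).2 ⟨x, mem_union_right U hxC, hx⟩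
  by_cases hdisj : Disjoint U (insert x C)
  · obtain ⟨U', hU', hadm⟩ := hU.exists_superset_of_disjoint hG hC hdisj hu hux
    exact ⟨U', hss.trans_subset hU', hadm⟩
  · have hgain := hC.weight_add_three_le_weight_union (fun hsub ↦ hx (hsub hxC))
      (not_disjoint_iff_nonempty_inter.1 hdisj)
    have hU4 := hU.neg_four_le_weight
    exact ⟨_, hss, hU.1.mono subset_union_left, Or.inr (by linarith)⟩

lemma isAdmissible_univ [Fintype V] (hconn : G.Connected) (hG : LocallyNonforesty G) :
    IsAdmissible G univ := by
  classical
  have := hconn.nonempty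
  obtain ⟨U, hU⟩ := exists_maximal_of_wellFoundedGT (IsAdmissible G) hG.exists_isAdmissible
  suffices U = univ from this ▸ hU.prop
  by_contra hne
  obtain ⟨U', hss, hU'⟩ :=
    hU.prop.exists_ssuperset hconn.preconnected hG (by simpa using hne)
  exact hU.not_prop_of_gt hss hU'

end

theorem stmt_12_general {V : Type*} [Fintype V] (G : SimpleGraph V) (n : ℕ)
    (hn : Fintype.card V = n) (hconn : G.Connected) (hloc : LocallyNonforesty G) :
    (if n % 4 = 0 ∨ n % 4 = 3 then 2 * n - 1 - n / 4 else 2 * n - n / 4)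
      ≤ G.edgeSet.ncard := by
  classical
  obtain ⟨-, hweight⟩ := isAdmissible_univ hconn hloc
  rw [weight, edgesWithin_univ, Finset.card_univ, hn, ← Set.ncard_coe_finset,
    G.coe_edgeFinset] at hweight
  split_ifs <;> omega

theorem stmt_12 {V : Type*} [Fintype V] (G : SimpleGraph V) (n : ℕ)
    (hn : Fintype.card V = n) (h8 : 8 ≤ n)
    (hconn : G.Connected) (hloc : LocallyNonforesty G) :
    (if n % 4 = 0 ∨ n % 4 = 3 then 2 * n - 1 - n / 4 else 2 * n - n / 4)
      ≤ G.edgeSet.ncard :=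
  stmt_12_general G n hn hconn hloc
end
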